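/- arXiv:1812.10545 — 2 statements merged into one kernel-verified Lean document; each statement's English description precedes it below -/
import Mathlib

section
/- Let A < B be real numbers, let α : [A,B] → ℝ be Hölder continuous with values in (−1/2, 1/2), and let φ : [A,B] → ℝ be Hölder continuous. Assume the function r ↦ cos(πα(r)) e^{π H[α](r)} φ(r) is Hölder continuous on [A,B]. Define ψ(s) = cos²(πα(s)) φ(s) − sin(πα(s)) e^{−π H[α](s)} H[ cos(πα(·)) e^{π H[α](·)} φ(·) ](s) for s ∈ (A,B). Then for every s ∈ (A,B) the principal value integral H[ψ](s) exists and ψ(s) + tan(πα(s)) H[ψ](s) = φ(s). -/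
open Filter Topology intervalIntegral

/-- The truncated approximants of the principal value integral `∫_A^B f(r)/(r−s) dr`. -/
noncomputable def pvApprox (A B : ℝ) (f : ℝ → ℝ) (s ε : ℝ) : ℝ :=
  (∫ r in A..(s - ε), f r / (r - s)) + ∫ r in (s + ε)..B, f r / (r - s)

/-- The principal value integral `PV ∫_A^B f(r)/(r−s) dr` (junk value if the limit
does not exist). -/
noncomputable def pv (A B : ℝ) (f : ℝ → ℝ) (s : ℝ) : ℝ :=
  limUnder (𝓝[>] (0 : ℝ)) (pvApprox A B f s)

/-- The finite Hilbert transform `H[f](s) = (1/π) PV ∫_A^B f(r)/(r−s) dr`. -/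
noncomputable def Hfin (A B : ℝ) (f : ℝ → ℝ) (s : ℝ) : ℝ :=
  (1 / Real.pi) * pv A B f s

/-!
Write `Φ` and `Ψ` for the Cauchy transforms of `α` and of `w = cos(πα) e^{πH[α]} φ`. By the
Plemelj formulas, their boundary values from the upper half-plane on `(A, B)` are `π (H[α] + i α)`
and `π (H[w] + i w)`. Hence `F = exp (-Φ) Ψ` has the boundary values
`Im F = π e^{-πH[α]} (cos(πα) w - sin(πα) H[w]) = π ψ` and
`Re F = π e^{-πH[α]} (cos(πα) H[w] + sin(πα) w)`, while `Im F = 0` on the line outside `[A, B]`.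

Since `|α| ≤ m < 1`, the singularities of `F` at `A` and `B` are of order less than `1`, and `F`
decays like `1/z`. Cauchy's theorem therefore gives `∫ F(x)/(x - ζ) dx = 0` for `ζ` in the lower
half-plane. Letting `ζ → s` and comparing the Cauchy kernel with the truncated kernel of the
principal value, one gets `H[Im F](s) = Re F(s)`, that is `H[ψ](s) = Re F(s) / π`. The inversion
formula is then `sin² + cos² = 1`.
-/

section

open MeasureTheory Set
open scoped NNReal Interval

/-! ### Hölder functions and power singularities -/

theorem holderOnWith_of_abs_sub_le {f : ℝ → ℝ} {s : Set ℝ} {C γ : ℝ≥0}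
    (h : ∀ x ∈ s, ∀ y ∈ s, |f x - f y| ≤ C * |x - y| ^ (γ : ℝ)) : HolderOnWith C γ f s := by
  intro x hx y hy
  rw [edist_dist, edist_dist, ENNReal.ofReal_rpow_of_nonneg dist_nonneg γ.coe_nonneg,
    ← ENNReal.ofReal_coe_nnreal, ← ENNReal.ofReal_mul C.coe_nonneg]
  exact ENNReal.ofReal_le_ofReal (h x hx y hy)

theorem holderWith_IccExtend {f : ℝ → ℝ} {A B : ℝ} {C γ : ℝ≥0} (hAB : A ≤ B)
    (hf : HolderOnWith C γ f (Icc A B)) :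
    HolderWith C γ (IccExtend hAB ((Icc A B).domRestrict f)) := by
  have h := (HolderWith.restrict_iff.2 hf).comp (LipschitzWith.projIcc hAB).holderWith
  rwa [NNReal.one_rpow, mul_one, mul_one] at h

theorem intervalIntegrable_abs_sub_rpow {p : ℝ} (hp : -1 < p) (c a b : ℝ) :
    IntervalIntegrable (fun x ↦ |x - c| ^ p) volume a b := by
  have h := (intervalIntegral.intervalIntegrable_cpow' (r := p) (a := a - c) (b := b - c)
    (by simpa)).norm.comp_sub_right c
  simpa [Complex.norm_cpow_real, ← Complex.ofReal_sub] using h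

theorem continuousAt_intervalIntegral_of_dominated {X E : Type*} [TopologicalSpace X]
    [FirstCountableTopology X] [NormedAddCommGroup E] [NormedSpace ℝ E] {F : X → ℝ → E}
    {bound : ℝ → ℝ} {a b : X → ℝ} {x₀ : X} (hF_meas : ∀ x, AEStronglyMeasurable (F x) volume)
    (h_bound : ∀ x t, ‖F x t‖ ≤ bound t) (h_int : ∀ c d, IntervalIntegrable bound volume c d)
    (h_cont : ∀ᵐ t, ContinuousAt (F · t) x₀) (ha : ContinuousAt a x₀) (hb : ContinuousAt b x₀) :
    ContinuousAt (fun x ↦ ∫ t in a x..b x, F x t) x₀ := by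
  have hprim {c : X → ℝ} (hc : ContinuousAt c x₀) :
      ContinuousAt (fun x ↦ ∫ t in 0..c x, F x t) x₀ := by
    have hlocal := intervalIntegral.continuousAt_parametric_primitive_of_dominated
      (F := F) (x₀ := x₀) (a₀ := 0) (b₀ := c x₀) bound (-(|c x₀| + 1)) (|c x₀| + 1)
      (fun x ↦ (hF_meas x).restrict) (.of_forall fun x ↦ .of_forall (h_bound x)) (h_int _ _)
      (ae_restrict_of_ae h_cont) (by constructor <;> linarith [abs_nonneg (c x₀)])
      (abs_lt.1 (lt_add_one _)) Real.volume_singleton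
    exact hlocal.comp (f := fun x ↦ (x, c x)) (continuousAt_id.prodMk hc)
  have hint (x : X) (c d : ℝ) : IntervalIntegrable (F x) volume c d :=
    (h_int c d).mono_fun' (hF_meas x).restrict (.of_forall (h_bound x))
  refine ((hprim hb).sub (hprim ha)).congr (.of_forall fun x ↦ ?_)
  exact intervalIntegral.integral_interval_sub_left (hint x _ _) (hint x _ _)

/-! ### The Cauchy transform and its boundary values -/

/-- The Cauchy transform `∫_A^B f(r)/(r - z) dr`, holomorphic in `z` off `[A, B]`. -/
noncomputable def cauchyTransform (A B : ℝ) (f : ℝ → ℝ) (z : ℂ) : ℂ :=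
  ∫ r in A..B, (f r : ℂ) / (r - z)

/-- The Cauchy transform with the value `f (re z)` subtracted from the density; for Hölder `f`
the integrand is only weakly singular, so this makes sense on the real line too. -/
noncomputable def cauchyRegular (A B : ℝ) (f : ℝ → ℝ) (z : ℂ) : ℂ :=
  ∫ r in A..B, ((f r - f z.re : ℝ) : ℂ) / (r - z)

/-- The branch of `log ((B - z)/(A - z))`, i.e. of the Cauchy transform of `1`, that is continuous
on the closed upper half-plane without `A` and `B`. The factors `I` rotate the upper half-plane
away from the cut of `Complex.log`. -/
noncomputable def cauchyLog (A B : ℝ) (z : ℂ) : ℂ :=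
  Complex.log (Complex.I * (B - z)) - Complex.log (Complex.I * (A - z))

/-- The continuous extension of the Cauchy transform from the open upper half-plane to the closed
one. -/
noncomputable def cauchyExt (A B : ℝ) (f : ℝ → ℝ) (z : ℂ) : ℂ :=
  cauchyRegular A B f z + f z.re * cauchyLog A B z

theorem norm_div_ofReal_sub_le_of_holderWith {f : ℝ → ℝ} {C γ : ℝ≥0} (hf : HolderWith C γ f)
    (r : ℝ) (z : ℂ) :
    ‖((f r - f z.re : ℝ) : ℂ) / (r - z)‖ ≤ C * |r - z.re| ^ (γ - 1 : ℝ) := by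
  rcases eq_or_ne r z.re with rfl | hr
  · simp only [sub_self, Complex.ofReal_zero, zero_div, norm_zero]
    positivity
  · have hpos : 0 < |r - z.re| := abs_pos.2 (sub_ne_zero.2 hr)
    have hre : |r - z.re| ≤ ‖(r : ℂ) - z‖ := by simpa using Complex.abs_re_le_norm ((r : ℂ) - z)
    rw [norm_div, Complex.norm_real, Real.rpow_sub_one hpos.ne', ← mul_div_assoc]
    exact div_le_div₀ (by positivity) (hf.dist_le r z.re) hpos hre

theorem intervalIntegrable_div_ofReal_sub_of_holderWith {f : ℝ → ℝ} {C γ : ℝ≥0} (hγ : 0 < γ)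
    (hf : HolderWith C γ f) (z : ℂ) (a b : ℝ) :
    IntervalIntegrable (fun r : ℝ ↦ ((f r - f z.re : ℝ) : ℂ) / (r - z)) volume a b := by
  have hmeas := (hf.continuous hγ).measurable
  exact ((intervalIntegrable_abs_sub_rpow (by simpa) z.re a b).const_mul C).mono_fun'
    (Measurable.aestronglyMeasurable (by fun_prop))
    (.of_forall fun r ↦ norm_div_ofReal_sub_le_of_holderWith hf r z)

theorem continuous_cauchyRegular {f : ℝ → ℝ} {C γ : ℝ≥0} (hγ : 0 < γ) (hf : HolderWith C γ f)
    (A B : ℝ) : Continuous (cauchyRegular A B f) := by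
  have hcont := hf.continuous hγ
  have hmeas := hcont.measurable
  -- Recentring at `z.re` makes the dominating function independent of `z`.
  set G : ℂ → ℝ → ℂ := fun z u ↦ ((f (u + z.re) - f z.re : ℝ) : ℂ) / ((u + z.re : ℝ) - z)
  have hshift : cauchyRegular A B f = fun z ↦ ∫ u in (A - z.re)..(B - z.re), G z u := by
    funext z
    rw [intervalIntegral.integral_comp_add_right
      (fun r : ℝ ↦ ((f r - f z.re : ℝ) : ℂ) / (r - z)), sub_add_cancel, sub_add_cancel,
      cauchyRegular]
  rw [hshift, continuous_iff_continuousAt]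
  intro z
  refine continuousAt_intervalIntegral_of_dominated (bound := fun u ↦ C * |u - 0| ^ (γ - 1 : ℝ))
    (fun w ↦ Measurable.aestronglyMeasurable (by fun_prop)) (fun w u ↦ ?_)
    (fun a b ↦ (intervalIntegrable_abs_sub_rpow (by simpa) 0 a b).const_mul C)
    ((Measure.ae_ne volume 0).mono fun u hu ↦ ?_) (by fun_prop) (by fun_prop)
  · simpa [G] using norm_div_ofReal_sub_le_of_holderWith hf (u + w.re) w
  · refine ContinuousAt.div (by fun_prop) (by fun_prop) fun h ↦ hu ?_
    simpa using congrArg Complex.re h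

theorem ofReal_sub_ne_zero {z : ℂ} (hz : z.im ≠ 0) (r : ℝ) : (r : ℂ) - z ≠ 0 := fun h ↦
  hz (by simpa using congrArg Complex.im h)

theorem intervalIntegrable_div_ofReal_sub {f : ℝ → ℝ} {A B : ℝ}
    (hf : IntervalIntegrable f volume A B) {z : ℂ} (hz : z.im ≠ 0) :
    IntervalIntegrable (fun r : ℝ ↦ (f r : ℂ) / (r - z)) volume A B := by
  have hcont : Continuous fun r : ℝ ↦ ((r : ℂ) - z)⁻¹ :=
    Continuous.inv₀ (by fun_prop) (ofReal_sub_ne_zero hz)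
  simpa only [div_eq_mul_inv] using IntervalIntegrable.mul_continuousOn
    (f := fun r ↦ (f r : ℂ)) ⟨hf.1.ofReal, hf.2.ofReal⟩ hcont.continuousOn

theorem differentiableAt_cauchyTransform {f : ℝ → ℝ} {A B : ℝ}
    (hf : IntervalIntegrable f volume A B) {z : ℂ} (hz : z.im ≠ 0) :
    DifferentiableAt ℂ (cauchyTransform A B f) z := by
  have hz2 : 0 < |z.im| / 2 := by positivity
  set U : Set ℂ := {w | |z.im| / 2 < |w.im|}
  have hU : U ∈ 𝓝 z := (isOpen_lt (by fun_prop) (by fun_prop)).mem_nhds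
    (half_lt_self (abs_pos.2 hz))
  have hne {w : ℂ} (hw : w ∈ U) : w.im ≠ 0 := abs_pos.1 (hz2.trans hw)
  have hmeas : AEStronglyMeasurable (fun r ↦ (f r : ℂ)) (volume.restrict (Ι A B)) :=
    Complex.continuous_ofReal.comp_aestronglyMeasurable hf.aestronglyMeasurable_restrict_uIoc
  refine (intervalIntegral.hasDerivAt_integral_of_dominated_loc_of_deriv_le (μ := volume)
    (F := fun (w : ℂ) (r : ℝ) ↦ (f r : ℂ) / (r - w))
    (F' := fun (w : ℂ) (r : ℝ) ↦ (f r : ℂ) / (r - w) ^ 2)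
    (bound := fun r ↦ ‖f r‖ / (|z.im| / 2) ^ 2) hU ?_ (intervalIntegrable_div_ofReal_sub hf hz)
    ?_ ?_ (hf.norm.div_const _) ?_).2.differentiableAt
  · exact Filter.mem_of_superset hU fun w hw ↦
      (intervalIntegrable_div_ofReal_sub hf (hne hw)).aestronglyMeasurable_restrict_uIoc
  · exact hmeas.div₀ (Measurable.aestronglyMeasurable (by fun_prop))
  · refine .of_forall fun r _ w hw ↦ ?_
    have him : |w.im| ≤ ‖(r : ℂ) - w‖ := by simpa using Complex.abs_im_le_norm ((r : ℂ) - w)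
    rw [norm_div, norm_pow, Complex.norm_real]
    gcongr
    exact hw.le.trans him
  · refine .of_forall fun r _ w hw ↦ ?_
    exact ((hasDerivAt_const w (f r : ℂ)).div ((hasDerivAt_id w).const_sub (r : ℂ))
      (ofReal_sub_ne_zero (hne hw) r)).congr_deriv (by simp)

theorem norm_cauchyTransform_le {f : ℝ → ℝ} {A B : ℝ} (hAB : A ≤ B)
    (hf : IntervalIntegrable f volume A B) {z : ℂ} (hz : 2 * (|A| + |B|) < ‖z‖) :
    ‖cauchyTransform A B f z‖ ≤ 2 * (∫ r in A..B, |f r|) / ‖z‖ := by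
  have hnorm : 0 < ‖z‖ := lt_of_le_of_lt (by positivity) hz
  have hbound (r : ℝ) (hr : r ∈ Ioc A B) : ‖(f r : ℂ) / (r - z)‖ ≤ |f r| * (2 / ‖z‖) := by
    have hr' : |r| ≤ |A| + |B| := (abs_le_max_abs_abs hr.1.le hr.2).trans
      (max_le_add_of_nonneg (abs_nonneg A) (abs_nonneg B))
    have hfar : ‖z‖ / 2 ≤ ‖(r : ℂ) - z‖ := by
      have := norm_sub_norm_le z (r : ℂ)
      rw [norm_sub_rev, Complex.norm_real, Real.norm_eq_abs] at this
      linarith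
    rw [norm_div, Complex.norm_real, Real.norm_eq_abs, ← mul_div_assoc, ← div_div_eq_mul_div]
    gcongr
  calc ‖cauchyTransform A B f z‖ ≤ ∫ r in A..B, |f r| * (2 / ‖z‖) :=
        intervalIntegral.norm_integral_le_of_norm_le hAB (.of_forall hbound) (hf.abs.mul_const _)
    _ = 2 * (∫ r in A..B, |f r|) / ‖z‖ := by rw [intervalIntegral.integral_mul_const]; ring

theorem integral_inv_ofReal_sub {z : ℂ} (hz : 0 < z.im) (A B : ℝ) :
    ∫ r in A..B, ((r : ℂ) - z)⁻¹ = cauchyLog A B z := by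
  refine intervalIntegral.integral_eq_sub_of_hasDerivAt
    (f := fun r : ℝ ↦ Complex.log (Complex.I * (r - z))) (fun r _ ↦ ?_) ?_
  · have hlin : HasDerivAt (fun r : ℝ ↦ Complex.I * ((r : ℂ) - z)) Complex.I r := by
      simpa using ((Complex.ofRealCLM.hasDerivAt (x := r)).sub_const z).const_mul Complex.I
    have hslit : Complex.I * ((r : ℂ) - z) ∈ Complex.slitPlane := by left; simpa using hz
    simpa [div_mul_eq_div_div] using hlin.clog_real hslit
  · exact (Continuous.inv₀ (by fun_prop) (ofReal_sub_ne_zero hz.ne')).intervalIntegrable _ _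

theorem cauchyExt_eq_cauchyTransform {f : ℝ → ℝ} {A B : ℝ} (hf : IntervalIntegrable f volume A B)
    {z : ℂ} (hz : 0 < z.im) : cauchyExt A B f z = cauchyTransform A B f z := by
  have hconst : IntervalIntegrable (fun r : ℝ ↦ (f z.re : ℂ) / (r - z)) volume A B :=
    intervalIntegrable_div_ofReal_sub (f := fun _ ↦ f z.re) intervalIntegrable_const hz.ne'
  rw [cauchyExt, ← integral_inv_ofReal_sub hz, ← intervalIntegral.integral_const_mul,
    ← eq_sub_iff_add_eq]
  simp only [cauchyRegular, cauchyTransform, Complex.ofReal_sub, sub_div, ← div_eq_mul_inv]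
  exact intervalIntegral.integral_sub (intervalIntegrable_div_ofReal_sub hf hz.ne') hconst

theorem continuousAt_cauchyLog {A B : ℝ} {z : ℂ} (hz : 0 ≤ z.im) (hA : z ≠ A) (hB : z ≠ B) :
    ContinuousAt (cauchyLog A B) z := by
  have hslit (c : ℝ) (hc : z ≠ c) : Complex.I * ((c : ℂ) - z) ∈ Complex.slitPlane := by
    rcases hz.lt_or_eq with him | him
    · left; simpa using him
    · right
      simpa using fun h ↦ hc (Complex.ext (by simpa using (sub_eq_zero.1 h).symm) (by simp [← him]))
  have hlin (c : ℝ) : ContinuousAt (fun w : ℂ ↦ Complex.I * ((c : ℂ) - w)) z := by fun_prop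
  exact ((hlin B).clog (hslit B hB)).sub ((hlin A).clog (hslit A hA))

theorem continuousAt_cauchyExt {f : ℝ → ℝ} {C γ : ℝ≥0} (hγ : 0 < γ) (hf : HolderWith C γ f)
    {A B : ℝ} {z : ℂ} (hz : 0 ≤ z.im) (hA : z ≠ A) (hB : z ≠ B) :
    ContinuousAt (cauchyExt A B f) z := by
  have hcont := hf.continuous hγ
  exact (continuous_cauchyRegular hγ hf A B).continuousAt.add
    (ContinuousAt.mul (by fun_prop) (continuousAt_cauchyLog hz hA hB))

theorem log_I_mul_ofReal_of_pos {t : ℝ} (ht : 0 < t) :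
    Complex.log (Complex.I * t) = Real.log t + Real.pi / 2 * Complex.I := by
  rw [mul_comm, Complex.log_ofReal_mul ht Complex.I_ne_zero, Complex.log_I]

theorem log_I_mul_ofReal_of_neg {t : ℝ} (ht : t < 0) :
    Complex.log (Complex.I * t) = Real.log t - Real.pi / 2 * Complex.I := by
  have hrot : Complex.I * t = ((-t : ℝ) : ℂ) * -Complex.I := by push_cast; ring
  rw [hrot, Complex.log_ofReal_mul (neg_pos.2 ht) (neg_ne_zero.2 Complex.I_ne_zero),
    Complex.log_neg_I, Real.log_neg_eq_log]
  ring

theorem cauchyLog_ofReal_of_mem_Ioo {A B x : ℝ} (hx : x ∈ Ioo A B) :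
    cauchyLog A B x = (Real.log (B - x) - Real.log (x - A) : ℝ) + Real.pi * Complex.I := by
  rw [cauchyLog, ← Complex.ofReal_sub, ← Complex.ofReal_sub,
    log_I_mul_ofReal_of_pos (sub_pos.2 hx.2), log_I_mul_ofReal_of_neg (sub_neg.2 hx.1),
    ← Real.log_neg_eq_log (A - x), neg_sub]
  push_cast
  ring

theorem im_cauchyLog_ofReal_of_notMem_Icc {A B x : ℝ} (hAB : A ≤ B) (hx : x ∉ Icc A B) :
    (cauchyLog A B x).im = 0 := by
  rw [cauchyLog, ← Complex.ofReal_sub, ← Complex.ofReal_sub]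
  rcases lt_or_ge x A with hA | hA
  · rw [log_I_mul_ofReal_of_pos (by linarith), log_I_mul_ofReal_of_pos (by linarith)]
    simp
  · have hB : B < x := not_le.1 fun hB ↦ hx ⟨hA, hB⟩
    rw [log_I_mul_ofReal_of_neg (by linarith), log_I_mul_ofReal_of_neg (by linarith)]
    simp

theorem cauchyRegular_ofReal (A B : ℝ) (f : ℝ → ℝ) (x : ℝ) :
    cauchyRegular A B f x = (∫ r in A..B, (f r - f x) / (r - x) : ℝ) := by
  simp [cauchyRegular, ← intervalIntegral.integral_ofReal]

theorem cauchyExt_ofReal_of_mem_Ioo {A B x : ℝ} (hx : x ∈ Ioo A B) (f : ℝ → ℝ) :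
    cauchyExt A B f x =
      ((∫ r in A..B, (f r - f x) / (r - x)) + f x * (Real.log (B - x) - Real.log (x - A)) : ℝ) +
        Real.pi * f x * Complex.I := by
  rw [cauchyExt, cauchyRegular_ofReal, cauchyLog_ofReal_of_mem_Ioo hx, Complex.ofReal_re]
  push_cast
  ring

theorem im_cauchyExt_ofReal_of_notMem_Icc {A B x : ℝ} (hAB : A ≤ B) (hx : x ∉ Icc A B)
    (f : ℝ → ℝ) : (cauchyExt A B f x).im = 0 := by
  simp [cauchyExt, cauchyRegular_ofReal, im_cauchyLog_ofReal_of_notMem_Icc hAB hx]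

/-! ### Principal values -/

theorem eventually_truncation_mem {A B s : ℝ} (hs : s ∈ Ioo A B) :
    ∀ᶠ ε in 𝓝[>] (0 : ℝ), 0 < ε ∧ A < s - ε ∧ s + ε < B := by
  filter_upwards [Ioo_mem_nhdsGT (lt_min (sub_pos.2 hs.1) (sub_pos.2 hs.2))] with ε hε
  exact ⟨hε.1, by linarith [hε.2.trans_le (min_le_left _ _)],
    by linarith [hε.2.trans_le (min_le_right _ _)]⟩

theorem pvApprox_eventuallyEq_of_eqOn {A B s : ℝ} (hs : s ∈ Ioo A B) {f g : ℝ → ℝ}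
    (h : EqOn f g (Ioo A B)) : pvApprox A B f s =ᶠ[𝓝[>] 0] pvApprox A B g s := by
  filter_upwards [eventually_truncation_mem hs] with ε ⟨hε, hA, hB⟩
  have hcongr {a b : ℝ} (ha : A ≤ a) (hab : a ≤ b) (hb : b ≤ B) :
      ∫ r in a..b, f r / (r - s) = ∫ r in a..b, g r / (r - s) := by
    refine intervalIntegral.integral_congr_uIoo fun r hr ↦ ?_
    rw [uIoo_of_le hab] at hr
    simp only [h (Ioo_subset_Ioo ha hb hr)]
  rw [pvApprox, pvApprox, hcongr le_rfl hA.le (by linarith), hcongr (by linarith) hB.le le_rfl]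

theorem Hfin_congr {A B s : ℝ} (hs : s ∈ Ioo A B) {f g : ℝ → ℝ} (h : EqOn f g (Ioo A B)) :
    Hfin A B f s = Hfin A B g s := by
  rw [Hfin, Hfin, pv, pv, limUnder, limUnder,
    Filter.map_congr (pvApprox_eventuallyEq_of_eqOn hs h)]

theorem Hfin_eq_div_pi {A B s L : ℝ} {f : ℝ → ℝ}
    (h : Tendsto (pvApprox A B f s) (𝓝[>] 0) (𝓝 L)) : Hfin A B f s = L / Real.pi := by
  rw [Hfin, pv, h.limUnder_eq, one_div_mul_eq_div]

theorem pvApprox_const_mul (A B c : ℝ) (f : ℝ → ℝ) (s ε : ℝ) :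
    pvApprox A B (fun r ↦ c * f r) s ε = c * pvApprox A B f s ε := by
  simp only [pvApprox, mul_div_assoc, intervalIntegral.integral_const_mul, mul_add]

theorem integral_inv_sub_truncation {A B s ε : ℝ} (hε : 0 < ε) (hA : A < s - ε) (hB : s + ε < B) :
    (∫ r in A..(s - ε), (r - s)⁻¹) + ∫ r in (s + ε)..B, (r - s)⁻¹ =
      Real.log (B - s) - Real.log (s - A) := by
  rw [intervalIntegral.integral_comp_sub_right (fun x ↦ x⁻¹) s,
    intervalIntegral.integral_comp_sub_right (fun x ↦ x⁻¹) s,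
    integral_inv_of_neg (by linarith) (by linarith),
    integral_inv_of_pos (by linarith) (by linarith),
    Real.log_div (by linarith) (by linarith), Real.log_div (by linarith) (by linarith),
    ← Real.log_neg_eq_log (s - ε - s), ← Real.log_neg_eq_log (A - s)]
  ring_nf

theorem pvApprox_eq_of_intervalIntegrable {A B s ε : ℝ} {f : ℝ → ℝ}
    (hf : IntervalIntegrable (fun r ↦ (f r - f s) / (r - s)) volume A B)
    (hε : 0 < ε) (hA : A < s - ε) (hB : s + ε < B) :
    pvApprox A B f s ε = (∫ r in A..(s - ε), (f r - f s) / (r - s)) +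
      (∫ r in (s + ε)..B, (f r - f s) / (r - s)) +
      f s * (Real.log (B - s) - Real.log (s - A)) := by
  have hAB : A ≤ B := by linarith
  have hsplit {a b : ℝ} (ha : a ∈ Icc A B) (hb : b ∈ Icc A B) (hs : s ∉ uIcc a b) :
      ∫ r in a..b, f r / (r - s) =
        (∫ r in a..b, (f r - f s) / (r - s)) + f s * ∫ r in a..b, (r - s)⁻¹ := by
    have hinv : ContinuousOn (fun r ↦ (r - s)⁻¹) (uIcc a b) :=
      ContinuousOn.inv₀ (by fun_prop) fun r hr h ↦ hs (sub_eq_zero.1 h ▸ hr)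
    have hsub : uIcc a b ⊆ uIcc A B := by
      rw [uIcc_of_le hAB]
      exact ordConnected_Icc.uIcc_subset ha hb
    rw [← intervalIntegral.integral_const_mul, ← intervalIntegral.integral_add
      (hf.mono_set hsub) (hinv.intervalIntegrable.const_mul _)]
    congr 1 with r
    ring
  rw [pvApprox, ← integral_inv_sub_truncation hε hA hB,
    hsplit ⟨le_rfl, hAB⟩ ⟨hA.le, by linarith⟩, hsplit ⟨by linarith, hB.le⟩ ⟨hAB, le_rfl⟩]
  · ring
  · simp [hB.le, hε]
  · simp [hA.le, hε]

theorem tendsto_pvApprox_of_intervalIntegrable {A B s : ℝ} (hs : s ∈ Ioo A B) {f : ℝ → ℝ}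
    (hf : IntervalIntegrable (fun r ↦ (f r - f s) / (r - s)) volume A B) :
    Tendsto (pvApprox A B f s) (𝓝[>] 0) (𝓝 ((∫ r in A..B, (f r - f s) / (r - s)) +
      f s * (Real.log (B - s) - Real.log (s - A)))) := by
  set g : ℝ → ℝ := fun r ↦ (f r - f s) / (r - s)
  have hAB : A ≤ B := (hs.1.trans hs.2).le
  have hnhds : uIcc A B ∈ 𝓝 s := by rw [uIcc_of_le hAB]; exact Icc_mem_nhds hs.1 hs.2
  have hleft : Tendsto (fun ε ↦ ∫ r in A..(s - ε), g r) (𝓝[>] 0) (𝓝 (∫ r in A..s, g r)) :=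
    ((intervalIntegral.continuousOn_primitive_interval' hf left_mem_uIcc).continuousAt
      hnhds).tendsto.comp (tendsto_nhdsWithin_of_tendsto_nhds
        (Continuous.tendsto' (by fun_prop) _ _ (sub_zero s)))
  have hright : Tendsto (fun ε ↦ ∫ r in (s + ε)..B, g r) (𝓝[>] 0) (𝓝 (∫ r in s..B, g r)) := by
    simp_rw [intervalIntegral.integral_symm B]
    exact (((intervalIntegral.continuousOn_primitive_interval' hf right_mem_uIcc).continuousAt
      hnhds).tendsto.comp (tendsto_nhdsWithin_of_tendsto_nhds
        (Continuous.tendsto' (by fun_prop) _ _ (add_zero s)))).neg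
  have hsub {a b : ℝ} (ha : a ∈ Icc A B) (hb : b ∈ Icc A B) : IntervalIntegrable g volume a b :=
    hf.mono_set (by rw [uIcc_of_le hAB]; exact ordConnected_Icc.uIcc_subset ha hb)
  have hs' : s ∈ Icc A B := Ioo_subset_Icc_self hs
  rw [← intervalIntegral.integral_add_adjacent_intervals (hsub ⟨le_rfl, hAB⟩ hs')
    (hsub hs' ⟨hAB, le_rfl⟩)]
  refine ((hleft.add hright).add_const _).congr' ?_
  filter_upwards [eventually_truncation_mem hs] with ε ⟨hε, hA, hB⟩
  exact (pvApprox_eq_of_intervalIntegrable hf hε hA hB).symm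

theorem intervalIntegrable_slope_of_holderWith {f : ℝ → ℝ} {C γ : ℝ≥0} (hγ : 0 < γ)
    (hf : HolderWith C γ f) (s a b : ℝ) :
    IntervalIntegrable (fun r ↦ (f r - f s) / (r - s)) volume a b := by
  have h := intervalIntegrable_div_ofReal_sub_of_holderWith hγ hf s a b
  have hre : (fun r ↦ (f r - f s) / (r - s)) =
      fun r : ℝ ↦ (((f r - f (s : ℂ).re : ℝ) : ℂ) / (r - s)).re := by
    funext r
    rw [← Complex.ofReal_sub, ← Complex.ofReal_div, Complex.ofReal_re, Complex.ofReal_re]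
  rw [hre]
  exact ⟨h.1.re, h.2.re⟩

/-- The Sokhotski–Plemelj formula for the boundary value from above. -/
theorem cauchyExt_ofReal_eq_Hfin {f : ℝ → ℝ} {C γ : ℝ≥0} (hγ : 0 < γ) (hf : HolderWith C γ f)
    {A B s : ℝ} (hs : s ∈ Ioo A B) :
    cauchyExt A B f s = Real.pi * (Hfin A B f s + f s * Complex.I) := by
  rw [Hfin_eq_div_pi (tendsto_pvApprox_of_intervalIntegrable hs
      (intervalIntegrable_slope_of_holderWith hγ hf s A B)),
    cauchyExt_ofReal_of_mem_Ioo hs, Complex.ofReal_div, mul_add,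
    mul_div_cancel₀ _ (Complex.ofReal_ne_zero.2 Real.pi_ne_zero), mul_assoc]

/-! ### The Poisson kernel of the half-plane and truncated inverses -/

/-- The Poisson kernel `-π⁻¹ Im (u + iη)⁻¹` of the upper half-plane, an approximate identity as
`η → 0⁺`. -/
noncomputable def halfPlanePoissonKernel (η u : ℝ) : ℝ :=
  Real.pi⁻¹ * (η / (η ^ 2 + u ^ 2))

/-- The kernel `1/u` cut off at `|u| < η`, whose integrals define principal values. -/
noncomputable def truncatedInv (η : ℝ) : ℝ → ℝ :=
  indicator {u | η ≤ |u|} fun u ↦ u⁻¹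

theorem continuous_halfPlanePoissonKernel {η : ℝ} (hη : 0 < η) :
    Continuous (halfPlanePoissonKernel η) :=
  continuous_const.mul (Continuous.div (by fun_prop) (by fun_prop) fun u ↦ by positivity)

theorem halfPlanePoissonKernel_nonneg {η : ℝ} (hη : 0 ≤ η) (u : ℝ) :
    0 ≤ halfPlanePoissonKernel η u := by
  unfold halfPlanePoissonKernel
  positivity

theorem one_add_sq_mul_halfPlanePoissonKernel {η : ℝ} (hη : 0 < η) (u : ℝ) :
    (1 + u ^ 2) * halfPlanePoissonKernel η u =
      (1 - η ^ 2) * halfPlanePoissonKernel η u + Real.pi⁻¹ * η := by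
  have : η ^ 2 + u ^ 2 ≠ 0 := by positivity
  unfold halfPlanePoissonKernel
  field_simp
  ring

theorem integral_halfPlanePoissonKernel (η a b : ℝ) :
    ∫ u in a..b, halfPlanePoissonKernel η u =
      Real.pi⁻¹ * (Real.arctan (b / η) - Real.arctan (a / η)) := by
  simp only [halfPlanePoissonKernel, intervalIntegral.integral_const_mul, integral_div_sq_add_sq]

theorem tendsto_integral_one_add_sq_mul_halfPlanePoissonKernel :
    Tendsto (fun η ↦ ∫ u in (-1)..1, (1 + u ^ 2) * halfPlanePoissonKernel η u)
      (𝓝[>] 0) (𝓝 1) := by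
  have hval : ∀ᶠ η in 𝓝[>] (0 : ℝ),
      (1 - η ^ 2) * (Real.pi⁻¹ * (2 * Real.arctan η⁻¹)) + 2 * (Real.pi⁻¹ * η) =
        ∫ u in (-1)..1, (1 + u ^ 2) * halfPlanePoissonKernel η u := by
    filter_upwards [self_mem_nhdsWithin] with η hη
    have hint := (continuous_halfPlanePoissonKernel hη).intervalIntegrable (μ := volume) (-1) 1
    simp_rw [one_add_sq_mul_halfPlanePoissonKernel hη]
    rw [intervalIntegral.integral_add (hint.const_mul _) intervalIntegrable_const,
      intervalIntegral.integral_const_mul, integral_halfPlanePoissonKernel,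
      intervalIntegral.integral_const, neg_div, Real.arctan_neg, one_div, smul_eq_mul]
    ring
  refine Tendsto.congr' hval ?_
  have harctan := (Real.tendsto_arctan_atTop.mono_right nhdsWithin_le_nhds).comp
    tendsto_inv_nhdsGT_zero
  have hid : Tendsto (fun η : ℝ ↦ η) (𝓝[>] 0) (𝓝 0) :=
    tendsto_nhdsWithin_of_tendsto_nhds tendsto_id
  simpa [mul_div_cancel₀] using (((hid.pow 2).const_sub 1).mul
    ((harctan.const_mul 2).const_mul Real.pi⁻¹)).add ((hid.const_mul Real.pi⁻¹).const_mul 2)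

theorem tendstoUniformlyOn_one_add_sq_mul_halfPlanePoissonKernel {δ : ℝ} (hδ : 0 < δ) :
    TendstoUniformlyOn (fun η u ↦ (1 + u ^ 2) * halfPlanePoissonKernel η u) 0 (𝓝[>] 0)
      {u | δ ≤ |u|} := by
  have hbound {η u : ℝ} (hη : 0 ≤ η) (hu : δ ≤ |u|) :
      (1 + u ^ 2) * halfPlanePoissonKernel η u ≤ Real.pi⁻¹ * (η * (1 + (δ ^ 2)⁻¹)) := by
    have hu0 : u ≠ 0 := abs_pos.1 (hδ.trans_le hu)
    have hsq : (u ^ 2)⁻¹ ≤ (δ ^ 2)⁻¹ := by rw [← sq_abs u]; gcongr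
    calc (1 + u ^ 2) * halfPlanePoissonKernel η u
        ≤ (1 + u ^ 2) * (Real.pi⁻¹ * (η / u ^ 2)) := by
          unfold halfPlanePoissonKernel; gcongr; nlinarith
      _ = Real.pi⁻¹ * (η * (1 + (u ^ 2)⁻¹)) := by field_simp; ring
      _ ≤ Real.pi⁻¹ * (η * (1 + (δ ^ 2)⁻¹)) := by gcongr
  have hlim : Tendsto (fun η : ℝ ↦ Real.pi⁻¹ * (η * (1 + (δ ^ 2)⁻¹))) (𝓝[>] 0) (𝓝 0) :=
    tendsto_nhdsWithin_of_tendsto_nhds (Continuous.tendsto' (by fun_prop) _ _ (by simp))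
  rw [Metric.tendstoUniformlyOn_iff]
  intro ε hε
  filter_upwards [hlim.eventually_lt_const hε, self_mem_nhdsWithin] with η hlt (hη : 0 < η) u hu
  have hnonneg := halfPlanePoissonKernel_nonneg hη.le u
  rw [Pi.zero_apply, dist_zero_left, Real.norm_of_nonneg (by positivity)]
  exact (hbound hη.le hu).trans_lt hlt

theorem tendsto_integral_halfPlanePoissonKernel_smul {E : Type*} [NormedAddCommGroup E]
    [NormedSpace ℝ E] [CompleteSpace E] {h : ℝ → E}
    (hint : Integrable fun u ↦ (1 + u ^ 2)⁻¹ • h u) (hcont : ContinuousAt h 0) :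
    Tendsto (fun η ↦ ∫ u, halfPlanePoissonKernel η u • h u) (𝓝[>] 0) (𝓝 (h 0)) := by
  have hunif (U : Set ℝ) (hU : IsOpen U) (h0 : 0 ∈ U) :
      TendstoUniformlyOn (fun η u ↦ (1 + u ^ 2) * halfPlanePoissonKernel η u) 0 (𝓝[>] 0) Uᶜ := by
    obtain ⟨δ, hδ, hball⟩ := Metric.isOpen_iff.1 hU 0 h0
    refine (tendstoUniformlyOn_one_add_sq_mul_halfPlanePoissonKernel hδ).mono fun u hu ↦ ?_
    exact not_lt.1 fun hlt ↦ hu (hball (by simpa using hlt))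
  have hmass : Tendsto (fun η ↦ ∫ u in Ioc (-1 : ℝ) 1, (1 + u ^ 2) * halfPlanePoissonKernel η u)
      (𝓝[>] 0) (𝓝 1) := by
    simp_rw [← intervalIntegral.integral_of_le (show (-1 : ℝ) ≤ 1 by norm_num)]
    exact tendsto_integral_one_add_sq_mul_halfPlanePoissonKernel
  have hweight : Tendsto (fun u : ℝ ↦ (1 + u ^ 2)⁻¹ • h u) (𝓝 0) (𝓝 (h 0)) := by
    have hone : Tendsto (fun u : ℝ ↦ (1 + u ^ 2)⁻¹) (𝓝 0) (𝓝 1) :=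
      Continuous.tendsto' (Continuous.inv₀ (by fun_prop) fun u ↦ by positivity) _ _ (by simp)
    simpa only [one_smul] using hone.smul hcont.tendsto
  have hpeak := tendsto_integral_peak_smul_of_integrable_of_tendsto measurableSet_Ioc
    (Ioc_mem_nhds (by norm_num) (by norm_num)) (by simp)
    (eventually_nhdsWithin_of_forall fun η (hη : 0 < η) u ↦
      mul_nonneg (by positivity) (halfPlanePoissonKernel_nonneg hη.le u)) hunif hmass
    (eventually_nhdsWithin_of_forall fun η hη ↦ Continuous.aestronglyMeasurable
      (by have := continuous_halfPlanePoissonKernel hη; fun_prop)) hint hweight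
  refine hpeak.congr fun η ↦ ?_
  congr 1 with u
  have : 1 + u ^ 2 ≠ 0 := by positivity
  rw [smul_smul, mul_right_comm, mul_inv_cancel₀ this, one_mul]

theorem truncatedInv_of_le {η u : ℝ} (h : η ≤ |u|) : truncatedInv η u = u⁻¹ :=
  indicator_of_mem (s := {u | η ≤ |u|}) h _

theorem truncatedInv_of_lt {η u : ℝ} (h : |u| < η) : truncatedInv η u = 0 :=
  indicator_of_notMem (s := {u | η ≤ |u|}) (not_le.2 h) _

theorem abs_truncatedInv_sub_le {η : ℝ} (hη : 0 < η) (u : ℝ) :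
    |truncatedInv η u - u / (η ^ 2 + u ^ 2)| ≤ Real.pi * halfPlanePoissonKernel η u := by
  have hden : 0 < η ^ 2 + u ^ 2 := by positivity
  rw [halfPlanePoissonKernel, mul_inv_cancel_left₀ Real.pi_ne_zero]
  by_cases hu : η ≤ |u|
  · have hu0 : u ≠ 0 := abs_pos.1 (hη.trans_le hu)
    have hdiff : u⁻¹ - u / (η ^ 2 + u ^ 2) = η / (η ^ 2 + u ^ 2) * (η / u) := by
      field_simp
      ring
    rw [truncatedInv_of_le hu, hdiff, abs_mul, abs_of_nonneg (by positivity), abs_div,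
      abs_of_pos hη]
    exact mul_le_of_le_one_right (by positivity) (div_le_one_of_le₀ hu (abs_nonneg u))
  · rw [truncatedInv_of_lt (not_le.1 hu), zero_sub, abs_neg, abs_div, abs_of_pos hden]
    gcongr
    exact (not_le.1 hu).le

theorem truncatedInv_neg (η u : ℝ) : truncatedInv η (-u) = -truncatedInv η u := by
  simp only [truncatedInv, indicator_apply, mem_ofPred_eq, abs_neg, inv_neg]
  split_ifs <;> simp

theorem halfPlanePoissonKernel_neg (η u : ℝ) :
    halfPlanePoissonKernel η (-u) = halfPlanePoissonKernel η u := by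
  simp only [halfPlanePoissonKernel, even_two.neg_pow]

theorem integral_smul_of_odd {E : Type*} [NormedAddCommGroup E] [NormedSpace ℝ E] {k : ℝ → ℝ}
    {h : ℝ → E} (hodd : ∀ u, k (-u) = -k u) (hint : Integrable fun u ↦ k u • h u) :
    ∫ u, k u • h u = (2⁻¹ : ℝ) • ∫ u, k u • (h u - h (-u)) := by
  have hreflect : ∫ u, k u • h (-u) = -∫ u, k u • h u := by
    rw [← MeasureTheory.integral_neg_eq_self, ← MeasureTheory.integral_neg]
    simp only [hodd, neg_neg, neg_smul]
  have hint' : Integrable fun u ↦ k u • h (-u) := by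
    simpa [hodd] using hint.comp_neg.neg
  simp only [smul_sub]
  rw [MeasureTheory.integral_sub hint hint', hreflect, sub_neg_eq_add, ← two_smul ℝ,
    smul_smul, inv_mul_cancel₀ two_ne_zero, one_smul]

theorem tendsto_integral_smul_of_odd_of_abs_le {E : Type*} [NormedAddCommGroup E]
    [NormedSpace ℝ E] {h : ℝ → E} {k : ℝ → ℝ → ℝ} {c : ℝ}
    (hodd : ∀ η u, k η (-u) = -k η u)
    (hbound : ∀ η > 0, ∀ u, |k η u| ≤ c * halfPlanePoissonKernel η u)
    (hPint : ∀ η > 0, Integrable fun u ↦ halfPlanePoissonKernel η u • h u)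
    (hkint : ∀ η > 0, Integrable fun u ↦ k η u • h u) (hcont : ContinuousAt h 0) :
    Tendsto (fun η ↦ ∫ u, k η u • h u) (𝓝[>] 0) (𝓝 0) := by
  have hdiff {η : ℝ} (hη : 0 < η) :
      Integrable fun u ↦ halfPlanePoissonKernel η u * ‖h u - h (-u)‖ := by
    refine ((hPint η hη).sub (hPint η hη).comp_neg).norm.congr (.of_forall fun u ↦ ?_)
    simp only [Pi.sub_apply, halfPlanePoissonKernel_neg, ← smul_sub, norm_smul,
      Real.norm_of_nonneg (halfPlanePoissonKernel_nonneg hη.le u)]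
  have hcont' : ContinuousAt (fun u ↦ ‖h u - h (-u)‖) 0 :=
    (hcont.sub (ContinuousAt.comp (by simpa using hcont) (by fun_prop))).norm
  have hweighted : Integrable fun u : ℝ ↦ (1 + u ^ 2)⁻¹ • ‖h u - h (-u)‖ := by
    refine ((hdiff one_pos).const_mul Real.pi).congr (.of_forall fun u ↦ ?_)
    simp [halfPlanePoissonKernel, mul_assoc, Real.pi_ne_zero]
  have hlim := (tendsto_integral_halfPlanePoissonKernel_smul hweighted hcont').const_mul (2⁻¹ * c)
  rw [neg_zero, sub_self, norm_zero, mul_zero] at hlim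
  refine squeeze_zero_norm' ?_ hlim
  filter_upwards [self_mem_nhdsWithin] with η hη
  rw [integral_smul_of_odd (hodd η) (hkint η hη), norm_smul, Real.norm_of_nonneg (by norm_num),
    mul_assoc, ← MeasureTheory.integral_const_mul]
  refine mul_le_mul_of_nonneg_left (norm_integral_le_of_norm_le ((hdiff hη).const_mul c)
    (.of_forall fun u ↦ ?_)) (by norm_num)
  rw [norm_smul, smul_eq_mul, ← mul_assoc]
  exact mul_le_mul_of_nonneg_right (hbound η hη u) (norm_nonneg _)

theorem norm_add_mul_I_sq (u η : ℝ) : ‖(u + η * Complex.I : ℂ)‖ ^ 2 = η ^ 2 + u ^ 2 := by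
  rw [Complex.sq_norm, Complex.normSq_add_mul_I, add_comm]

theorem div_add_mul_I (w : ℂ) (u η : ℝ) :
    w / (u + η * Complex.I) = (u / (η ^ 2 + u ^ 2)) • w -
      (Real.pi * Complex.I) * (halfPlanePoissonKernel η u • w) := by
  have hinv : (u + η * Complex.I : ℂ)⁻¹ =
      (u / (η ^ 2 + u ^ 2) : ℝ) - Real.pi * Complex.I * halfPlanePoissonKernel η u := by
    have hpi : (Real.pi : ℂ) ≠ 0 := Complex.ofReal_ne_zero.2 Real.pi_ne_zero
    rw [Complex.inv_def, Complex.normSq_add_mul_I, halfPlanePoissonKernel]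
    push_cast
    simp only [map_add, map_mul, Complex.conj_ofReal, Complex.conj_I]
    field_simp
    ring
  rw [div_eq_inv_mul, hinv, Complex.real_smul, Complex.real_smul]
  ring

theorem integrable_smul_of_abs_mul_norm_le {F : ℝ → ℂ} {k : ℝ → ℝ} {η M : ℝ} (hη : η ≠ 0)
    (hF : Integrable fun u : ℝ ↦ F u / (u + η * Complex.I)) (hk : Measurable k)
    (hM : ∀ u, |k u| * ‖(u + η * Complex.I : ℂ)‖ ≤ M) : Integrable fun u ↦ k u • F u := by
  have hne (u : ℝ) : (u + η * Complex.I : ℂ) ≠ 0 := fun h ↦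
    hη (by simpa using congrArg Complex.im h)
  refine (hF.bdd_mul (f := fun u : ℝ ↦ (k u : ℂ) * (u + η * Complex.I)) (c := M)
    (Measurable.aestronglyMeasurable (by fun_prop))
    (.of_forall fun u ↦ by simpa using hM u)).congr (.of_forall fun u ↦ ?_)
  simp only [Complex.real_smul]
  field_simp [hne u]

theorem integrable_truncatedInv_smul {F : ℝ → ℂ} {η : ℝ} (hη : 0 < η)
    (hF : Integrable fun u : ℝ ↦ F u / (u + η * Complex.I)) :
    Integrable fun u ↦ truncatedInv η u • F u := by
  refine integrable_smul_of_abs_mul_norm_le (M := 2) hη.ne' hF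
    (measurable_inv.indicator (measurableSet_le measurable_const measurable_abs)) fun u ↦ ?_
  by_cases hu : η ≤ |u|
  · have hnorm : ‖(u + η * Complex.I : ℂ)‖ ≤ 2 * |u| := by
      refine (norm_add_le _ _).trans ?_
      simp only [Complex.norm_real, Real.norm_eq_abs, norm_mul, Complex.norm_I, abs_of_pos hη]
      linarith
    rw [truncatedInv_of_le hu, abs_inv, inv_mul_le_iff₀ (hη.trans_le hu), mul_comm _ (2 : ℝ)]
    exact hnorm
  · simp [truncatedInv_of_lt (not_le.1 hu)]

theorem integrable_halfPlanePoissonKernel_smul {F : ℝ → ℂ} {η : ℝ} (hη : 0 < η)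
    (hF : Integrable fun u : ℝ ↦ F u / (u + η * Complex.I)) :
    Integrable fun u ↦ halfPlanePoissonKernel η u • F u := by
  refine integrable_smul_of_abs_mul_norm_le (M := Real.pi⁻¹) hη.ne' hF
    (continuous_halfPlanePoissonKernel hη).measurable fun u ↦ ?_
  have him : η ≤ ‖(u + η * Complex.I : ℂ)‖ := by
    simpa [abs_of_pos hη] using Complex.abs_im_le_norm (u + η * Complex.I : ℂ)
  have hpos := hη.trans_le him
  rw [abs_of_nonneg (halfPlanePoissonKernel_nonneg hη.le u), halfPlanePoissonKernel,
    ← norm_add_mul_I_sq, mul_assoc]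
  refine mul_le_of_le_one_right (by positivity) ?_
  rw [div_mul_eq_mul_div, sq, mul_div_mul_right _ _ hpos.ne']
  exact div_le_one_of_le₀ him hpos.le

/-- One half of the Hilbert transform pair: for boundary values of functions holomorphic in the
upper half-plane, principal values are given by the function itself. -/
theorem tendsto_integral_truncatedInv_smul {F : ℝ → ℂ}
    (hint : ∀ η : ℝ, 0 < η → Integrable fun u : ℝ ↦ F u / (u + η * Complex.I))
    (hzero : ∀ η : ℝ, 0 < η → ∫ u : ℝ, F u / (u + η * Complex.I) = 0) (hcont : ContinuousAt F 0) :
    Tendsto (fun η ↦ ∫ u, truncatedInv η u • F u) (𝓝[>] 0)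
      (𝓝 (Real.pi * Complex.I * F 0)) := by
  set k : ℝ → ℝ → ℝ := fun η u ↦ truncatedInv η u - u / (η ^ 2 + u ^ 2)
  have hPint (η : ℝ) (hη : 0 < η) := integrable_halfPlanePoissonKernel_smul hη (hint η hη)
  have hsplit (η u : ℝ) : k η u • F u = truncatedInv η u • F u -
      F u / (u + η * Complex.I) - Real.pi * Complex.I * (halfPlanePoissonKernel η u • F u) := by
    rw [div_add_mul_I, sub_smul]
    abel
  have hkint (η : ℝ) (hη : 0 < η) : Integrable fun u ↦ k η u • F u := by
    simp_rw [hsplit]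
    exact ((integrable_truncatedInv_smul hη (hint η hη)).sub (hint η hη)).sub
      ((hPint η hη).const_mul _)
  have hk : Tendsto (fun η ↦ ∫ u, k η u • F u) (𝓝[>] 0) (𝓝 0) := by
    refine tendsto_integral_smul_of_odd_of_abs_le (fun η u ↦ ?_)
      (fun η hη ↦ abs_truncatedInv_sub_le hη) hPint hkint hcont
    simp only [k, truncatedInv_neg, even_two.neg_pow, neg_div, neg_sub_neg, neg_sub]
  have hweighted : Integrable fun u : ℝ ↦ (1 + u ^ 2)⁻¹ • F u := by
    refine ((hPint 1 one_pos).const_mul (Real.pi : ℂ)).congr (.of_forall fun u ↦ ?_)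
    simp [halfPlanePoissonKernel, ← mul_assoc, Real.pi_ne_zero]
  have hP := (tendsto_integral_halfPlanePoissonKernel_smul hweighted hcont).const_mul
    (Real.pi * Complex.I)
  rw [← zero_add (Real.pi * Complex.I * F 0)]
  refine (hk.add hP).congr' ?_
  filter_upwards [self_mem_nhdsWithin] with η (hη : 0 < η)
  rw [← MeasureTheory.integral_const_mul,
    ← MeasureTheory.integral_add (hkint η hη) ((hPint η hη).const_mul _)]
  simp_rw [hsplit, sub_add_cancel]
  rw [MeasureTheory.integral_sub (integrable_truncatedInv_smul hη (hint η hη)) (hint η hη),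
    hzero η hη, sub_zero]

theorem pvApprox_eq_integral_truncatedInv {A B s η : ℝ} {V : ℝ → ℝ} (hη : 0 < η)
    (hA : A < s - η) (hB : s + η < B) (hV : ∀ x ∉ Icc A B, V x = 0)
    (hint : Integrable fun u ↦ truncatedInv η u * V (s + u)) :
    pvApprox A B V s η = ∫ u, truncatedInv η u * V (s + u) := by
  have hint' : Integrable fun x ↦ truncatedInv η (x - s) * V x := by
    simpa using hint.comp_sub_right s
  set S : Set ℝ := Ioc A (s - η) ∪ Ioc (s + η) B
  have hS : EqOn (fun x ↦ V x / (x - s)) (fun x ↦ truncatedInv η (x - s) * V x) S := by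
    intro x hx
    have hmem : η ≤ |x - s| := by
      rcases hx with hx | hx
      · exact le_abs.2 (.inr (by linarith [hx.2]))
      · exact le_abs.2 (.inl (by linarith [hx.1]))
    simp only [truncatedInv_of_le hmem, div_eq_inv_mul]
  have hSc : ∀ᵐ x, x ∉ S → truncatedInv η (x - s) * V x = 0 := by
    filter_upwards [Measure.ae_ne volume A, Measure.ae_ne volume (s + η)] with x hxA hxs hxS
    by_cases hx : x ∈ Icc A B
    · have hlt : |x - s| < η := by
        simp only [S, mem_union, mem_Ioc, not_or, not_and, not_le] at hxS
        have h1 := hxS.1 (lt_of_le_of_ne hx.1 hxA.symm)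
        have h2 : x < s + η := lt_of_le_of_ne (not_lt.1 fun h ↦ (hxS.2 h).not_ge hx.2) hxs
        rw [abs_lt]
        constructor <;> linarith
      rw [truncatedInv_of_lt hlt, zero_mul]
    · rw [hV x hx, mul_zero]
  have hSm : MeasurableSet S := measurableSet_Ioc.union measurableSet_Ioc
  have hdisj : Disjoint (Ioc A (s - η)) (Ioc (s + η) B) :=
    disjoint_left.2 fun x hx hx' ↦ by linarith [hx.2, hx'.1]
  have hintS : IntegrableOn (fun x ↦ V x / (x - s)) S := hint'.integrableOn.congr_fun hS.symm hSm
  calc pvApprox A B V s η = ∫ x in S, V x / (x - s) := by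
        rw [pvApprox, intervalIntegral.integral_of_le hA.le, intervalIntegral.integral_of_le hB.le,
          setIntegral_union hdisj measurableSet_Ioc hintS.left_of_union hintS.right_of_union]
    _ = ∫ x, truncatedInv η (x - s) * V x := by
        rw [setIntegral_congr_fun hSm hS, setIntegral_eq_integral_of_ae_compl_eq_zero hSc]
    _ = ∫ u, truncatedInv η u * V (s + u) := by
        rw [← integral_add_left_eq_self _ s]
        simp

/-! ### Cauchy's theorem in the upper half-plane -/

theorem eventually_cobounded_inf_principal_iff {s : Set ℂ} {P : ℂ → Prop} :
    (∀ᶠ z in Bornology.cobounded ℂ ⊓ 𝓟 s, P z) ↔ ∃ R : ℝ, ∀ z ∈ s, R ≤ ‖z‖ → P z := by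
  simp only [(hasBasis_cobounded_norm.inf_principal s).eventually_iff, true_and]
  exact exists_congr fun R ↦ ⟨fun h z hs hz ↦ h ⟨hz, hs⟩, fun h z hz ↦ h z hz.2 hz.1⟩

theorem norm_integral_ofReal_add_mul_I_le {G : ℂ → ℂ} {t y M : ℝ}
    (hG : DifferentiableOn ℂ G {z | 0 < z.im}) (hy : 0 < y) (hyt : y ≤ t)
    (hM : ∀ z : ℂ, 0 < z.im → t ≤ ‖z‖ → ‖G z‖ ≤ M) :
    ‖∫ x in (-t)..t, G (x + y * Complex.I)‖ ≤ 4 * t * M := by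
  have ht : 0 < t := hy.trans_le hyt
  have hM0 : 0 ≤ M := (norm_nonneg _).trans (hM (t * Complex.I) (by simpa) (by simp [le_abs_self]))
  have htop : ‖∫ x in (-t)..t, G (x + t * Complex.I)‖ ≤ M * |t - -t| :=
    intervalIntegral.norm_integral_le_of_norm_le_const fun x _ ↦ hM _ (by simpa)
      ((le_abs_self t).trans (by simpa using Complex.abs_im_le_norm (x + t * Complex.I)))
  have hside (c : ℝ) (hc : |c| = t) : ‖∫ v in y..t, G (c + v * Complex.I)‖ ≤ M * |t - y| := by
    refine intervalIntegral.norm_integral_le_of_norm_le_const fun v hv ↦ hM _ ?_ ?_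
    · rw [uIoc_of_le hyt] at hv
      simpa using hy.trans hv.1
    · simpa [hc] using Complex.abs_re_le_norm (c + v * Complex.I)
  have hrect := Complex.integral_boundary_rect_eq_zero_of_differentiableOn G ⟨-t, y⟩ ⟨t, t⟩
    (hG.mono fun z hz ↦ hy.trans_le ((uIcc_of_le hyt).subset hz.2).1)
  have hbottom : ∫ x in (-t)..t, G (x + y * Complex.I) =
      (∫ x in (-t)..t, G (x + t * Complex.I)) -
        Complex.I • (∫ v in y..t, G (t + v * Complex.I)) +
        Complex.I • ∫ v in y..t, G ((-t : ℝ) + v * Complex.I) := by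
    linear_combination hrect
  calc ‖∫ x in (-t)..t, G (x + y * Complex.I)‖
      ≤ M * |t - -t| + M * |t - y| + M * |t - y| := by
        rw [hbottom]
        refine (norm_add_le _ _).trans (add_le_add ((norm_sub_le _ _).trans
          (add_le_add htop ?_)) ?_) <;> rw [norm_smul, Complex.norm_I, one_mul]
        · exact hside t (abs_of_pos ht)
        · exact hside (-t) (by rw [abs_neg, abs_of_pos ht])
    _ ≤ 4 * t * M := by
        rw [abs_of_nonneg (by linarith), abs_of_nonneg (by linarith)]
        nlinarith

theorem integral_ofReal_add_mul_I_eq_zero {G : ℂ → ℂ} {y : ℝ} (hy : 0 < y)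
    (hG : DifferentiableOn ℂ G {z | 0 < z.im})
    (hdecay : G =o[Bornology.cobounded ℂ ⊓ 𝓟 {z | 0 < z.im}] fun z ↦ z⁻¹)
    (hint : Integrable fun x : ℝ ↦ G (x + y * Complex.I)) :
    ∫ x : ℝ, G (x + y * Complex.I) = 0 := by
  refine tendsto_nhds_unique
    (intervalIntegral_tendsto_integral hint tendsto_neg_atTop_atBot tendsto_id) ?_
  refine Metric.tendsto_nhds.2 fun ε hε ↦ ?_
  obtain ⟨R, hR⟩ := eventually_cobounded_inf_principal_iff.1
    (hdecay.def (c := ε / 8) (by positivity))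
  filter_upwards [eventually_ge_atTop R, eventually_ge_atTop y] with t hRt hyt
  have ht : 0 < t := hy.trans_le hyt
  have hM (z : ℂ) (hz : 0 < z.im) (hzt : t ≤ ‖z‖) : ‖G z‖ ≤ ε / 8 * t⁻¹ := by
    refine (hR z hz (hRt.trans hzt)).trans ?_
    rw [norm_inv]
    gcongr
  rw [dist_zero_right]
  calc ‖∫ x in (-t)..t, G (x + y * Complex.I)‖ ≤ 4 * t * (ε / 8 * t⁻¹) :=
        norm_integral_ofReal_add_mul_I_le hG hy hyt hM
    _ = ε / 2 := by field_simp; norm_num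
    _ < ε := half_lt_self hε

theorem integrable_and_integral_eq_zero_of_tendsto {G : ℂ → ℂ} {G₀ : ℝ → ℂ} {g : ℝ → ℝ}
    (hG : DifferentiableOn ℂ G {z | 0 < z.im})
    (hdecay : G =o[Bornology.cobounded ℂ ⊓ 𝓟 {z | 0 < z.im}] fun z ↦ z⁻¹)
    (hg : Integrable g) (hbound : ∀ᵐ x : ℝ, ∀ y : ℝ, 0 < y → ‖G (x + y * Complex.I)‖ ≤ g x)
    (hlim : ∀ᵐ x : ℝ, Tendsto (fun y : ℝ ↦ G (x + y * Complex.I)) (𝓝[>] 0) (𝓝 (G₀ x))) :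
    Integrable G₀ ∧ ∫ x, G₀ x = 0 := by
  have hmeas {y : ℝ} (hy : 0 < y) :
      AEStronglyMeasurable (fun x : ℝ ↦ G (x + y * Complex.I)) volume :=
    (hG.continuousOn.comp_continuous (by fun_prop) fun x ↦ by simpa using hy).aestronglyMeasurable
  have hmeas_ev : ∀ᶠ y : ℝ in 𝓝[>] (0 : ℝ),
      AEStronglyMeasurable (fun x : ℝ ↦ G (x + y * Complex.I)) volume :=
    eventually_nhdsWithin_of_forall fun y ↦ hmeas
  have hbound' {y : ℝ} (hy : 0 < y) : ∀ᵐ x : ℝ, ‖G (x + y * Complex.I)‖ ≤ g x :=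
    hbound.mono fun x hx ↦ hx y hy
  have hG₀meas : AEStronglyMeasurable G₀ volume := by
    obtain ⟨y, -, hy, hylim⟩ := exists_seq_strictAnti_tendsto_nhdsWithin (0 : ℝ)
    exact aestronglyMeasurable_of_tendsto_ae atTop (fun n ↦ hmeas (hy n))
      (hlim.mono fun x hx ↦ hx.comp hylim)
  constructor
  · refine hg.mono' hG₀meas ?_
    filter_upwards [hbound, hlim] with x hx hx'
    exact le_of_tendsto hx'.norm (eventually_nhdsWithin_of_forall hx)
  · refine tendsto_nhds_unique (tendsto_integral_filter_of_dominated_convergence g hmeas_ev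
      (eventually_nhdsWithin_of_forall fun y ↦ hbound') hg hlim) (tendsto_const_nhds.congr' ?_)
    filter_upwards [self_mem_nhdsWithin] with y hy
    exact (integral_ofReal_add_mul_I_eq_zero hy hG hdecay
      (hg.mono' (hmeas hy) (hbound' hy))).symm

theorem exists_integrable_norm_div_sub_le {F : ℂ → ℂ} {p : ℝ → ℝ} {ζ : ℂ}
    (hdecay : F =O[Bornology.cobounded ℂ ⊓ 𝓟 {z | 0 < z.im}] fun z ↦ z⁻¹)
    (hp : LocallyIntegrable p)
    (hbound : ∀ᵐ x : ℝ, ∀ y : ℝ, 0 < y → ‖F (x + y * Complex.I)‖ ≤ p x) (hζ : ζ.im < 0) :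
    ∃ g : ℝ → ℝ, Integrable g ∧ ∀ᵐ x : ℝ, ∀ y : ℝ, 0 < y →
      ‖F (x + y * Complex.I) / (x + y * Complex.I - ζ)‖ ≤ g x := by
  obtain ⟨K, hK, hFK⟩ := hdecay.exists_nonneg
  obtain ⟨R₀, hR₀⟩ := eventually_cobounded_inf_principal_iff.1 hFK.bound
  set R : ℝ := max R₀ (max (2 * ‖ζ‖) 1)
  refine ⟨fun x ↦ (Icc (-R) R).indicator (fun x ↦ p x / -ζ.im) x + 4 * K * (1 + x ^ 2)⁻¹,
    .add ?_ (integrable_inv_one_add_sq.const_mul _), ?_⟩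
  · exact (integrable_indicator_iff measurableSet_Icc).2
      ((hp.integrableOn_isCompact isCompact_Icc).div_const _)
  filter_upwards [hbound] with x hx y hy
  set z : ℂ := x + y * Complex.I
  have hzim : 0 < z.im := by simpa [z]
  rw [norm_div]
  by_cases hxR : x ∈ Icc (-R) R
  · have him : -ζ.im ≤ ‖z - ζ‖ := by
      refine le_trans ?_ ((le_abs_self _).trans (Complex.abs_im_le_norm (z - ζ)))
      rw [Complex.sub_im]
      linarith
    rw [indicator_of_mem hxR]
    refine le_add_of_le_of_nonneg ?_ (by positivity)
    exact div_le_div₀ ((norm_nonneg _).trans (hx y hy)) (hx y hy) (neg_pos.2 hζ) him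
  · have hRx : R < |x| := not_le.1 fun h ↦ hxR (abs_le.1 h)
    have hRz : |x| ≤ ‖z‖ := by simpa [z] using Complex.abs_re_le_norm z
    have hx1 : 1 < |x| := ((le_max_right _ _).trans (le_max_right _ _)).trans_lt hRx
    have hfar : |x| / 2 ≤ ‖z - ζ‖ := by
      have hζR : 2 * ‖ζ‖ ≤ R := (le_max_left _ _).trans (le_max_right _ _)
      linarith [norm_sub_norm_le z ζ]
    have hFz : ‖F z‖ ≤ K * |x|⁻¹ := by
      refine (hR₀ z hzim (by linarith [le_max_left R₀ (max (2 * ‖ζ‖) 1)])).trans ?_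
      rw [norm_inv]
      gcongr
    rw [indicator_of_notMem hxR, zero_add]
    calc ‖F z‖ / ‖z - ζ‖ ≤ K * |x|⁻¹ / (|x| / 2) := by gcongr
      _ = 2 * K * (x ^ 2)⁻¹ := by rw [← sq_abs]; field_simp
      _ ≤ 4 * K * (1 + x ^ 2)⁻¹ := by
        have hx2 : 1 < x ^ 2 := by rwa [one_lt_sq_iff_one_lt_abs]
        rw [← div_eq_mul_inv, ← div_eq_mul_inv, div_le_div_iff₀ (by positivity) (by positivity)]
        nlinarith

theorem integrable_and_integral_div_sub_eq_zero {F : ℂ → ℂ} {p : ℝ → ℝ} {ζ : ℂ}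
    (hF : DifferentiableOn ℂ F {z | 0 < z.im})
    (hdecay : F =O[Bornology.cobounded ℂ ⊓ 𝓟 {z | 0 < z.im}] fun z ↦ z⁻¹)
    (hp : LocallyIntegrable p)
    (hbound : ∀ᵐ x : ℝ, ∀ y : ℝ, 0 < y → ‖F (x + y * Complex.I)‖ ≤ p x)
    (hcont : ∀ᵐ x : ℝ, ContinuousAt F x) (hζ : ζ.im < 0) :
    Integrable (fun x : ℝ ↦ F x / (x - ζ)) ∧ ∫ x : ℝ, F x / (x - ζ) = 0 := by
  have hne {z : ℂ} (hz : 0 ≤ z.im) : z - ζ ≠ 0 := fun h ↦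
    (hζ.trans_le hz).ne' (by simpa [sub_eq_zero] using congrArg Complex.im h)
  obtain ⟨g, hg, hgbound⟩ := exists_integrable_norm_div_sub_le hdecay hp hbound hζ
  have hinv : (fun z ↦ (z - ζ)⁻¹) =o[Bornology.cobounded ℂ ⊓ 𝓟 {z | 0 < z.im}]
      fun _ ↦ (1 : ℂ) :=
    (Asymptotics.isLittleO_one_iff ℂ).2 ((tendsto_inv₀_cobounded.comp
      (tendsto_sub_const_cobounded ζ)).mono_left inf_le_left)
  refine integrable_and_integral_eq_zero_of_tendsto (G := fun z ↦ F z / (z - ζ))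
    (hF.div (by fun_prop) fun z hz ↦ hne (le_of_lt hz))
    (by simpa [div_eq_mul_inv] using hdecay.mul_isLittleO hinv) hg hgbound ?_
  filter_upwards [hcont] with x hx
  have hquot : ContinuousAt (fun z ↦ F z / (z - ζ)) x :=
    hx.div (by fun_prop) (hne (by simp))
  exact hquot.tendsto.comp (tendsto_nhdsWithin_of_tendsto_nhds
    (Continuous.tendsto' (by fun_prop) _ _ (by simp)))

theorem tendsto_pvApprox_im {F : ℂ → ℂ} {p : ℝ → ℝ} {A B s : ℝ}
    (hF : DifferentiableOn ℂ F {z | 0 < z.im})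
    (hdecay : F =O[Bornology.cobounded ℂ ⊓ 𝓟 {z | 0 < z.im}] fun z ↦ z⁻¹)
    (hp : LocallyIntegrable p)
    (hbound : ∀ᵐ x : ℝ, ∀ y : ℝ, 0 < y → ‖F (x + y * Complex.I)‖ ≤ p x)
    (hcont : ∀ᵐ x : ℝ, ContinuousAt F x) (hs : s ∈ Ioo A B)
    (him : ∀ x ∉ Icc A B, (F (x : ℝ)).im = 0) (hFs : ContinuousAt F s) :
    Tendsto (pvApprox A B (fun x ↦ (F x).im) s) (𝓝[>] 0) (𝓝 (Real.pi * (F s).re)) := by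
  have hshift {η : ℝ} (hη : 0 < η) := integrable_and_integral_div_sub_eq_zero hF hdecay hp hbound
    hcont (ζ := s - η * Complex.I) (by simpa)
  have hquot (η : ℝ) (u : ℝ) : F (s + u : ℝ) / ((s + u : ℝ) - (s - η * Complex.I)) =
      F (s + u : ℝ) / (u + η * Complex.I) := by
    push_cast
    ring_nf
  have hint (η : ℝ) (hη : 0 < η) :
      Integrable fun u : ℝ ↦ F (s + u : ℝ) / (u + η * Complex.I) := by
    simpa only [hquot] using (hshift hη).1.comp_add_left s
  have hzero (η : ℝ) (hη : 0 < η) : ∫ u : ℝ, F (s + u : ℝ) / (u + η * Complex.I) = 0 := by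
    simp_rw [← hquot]
    rw [integral_add_left_eq_self (fun x : ℝ ↦ F x / (x - (s - η * Complex.I))) s, (hshift hη).2]
  have hcont₀ : ContinuousAt (fun u : ℝ ↦ F (s + u : ℝ)) 0 :=
    ContinuousAt.comp (g := F) (by simpa using hFs) (by fun_prop)
  have hlim := (Complex.continuous_im.tendsto _).comp
    (tendsto_integral_truncatedInv_smul hint hzero hcont₀)
  have hval : (Real.pi * Complex.I * F (s + 0 : ℝ)).im = Real.pi * (F s).re := by simp
  rw [hval] at hlim
  refine hlim.congr' ?_
  filter_upwards [eventually_truncation_mem hs] with η ⟨hη, hA, hB⟩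
  have hT := integrable_truncatedInv_smul hη (hint η hη)
  rw [pvApprox_eq_integral_truncatedInv hη hA hB him (by simpa using hT.im)]
  simpa using (Complex.imCLM.integral_comp_comm hT).symm

/-! ### Growth of `exp (-Φ) * Ψ` for Cauchy transforms `Φ` and `Ψ` -/

theorem exp_mul_log_sub_log_le {a b x D θ : ℝ} (hx : 0 < x) (hxa : x ≤ a) (hb : 0 < b)
    (hba : b ≤ a + D) (hD : 0 ≤ D) (hθ : θ ∈ Icc (0 : ℝ) 1) :
    Real.exp (θ * (Real.log b - Real.log a)) ≤ 1 + D ^ θ * x ^ (-θ) := by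
  have ha : 0 < a := hx.trans_le hxa
  have hratio : b / a ≤ 1 + D / x := calc
    b / a ≤ (a + D) / a := by gcongr
    _ = 1 + D / a := by field_simp
    _ ≤ 1 + D / x := by gcongr
  calc Real.exp (θ * (Real.log b - Real.log a)) = (b / a) ^ θ := by
        rw [Real.rpow_def_of_pos (by positivity), Real.log_div hb.ne' ha.ne', mul_comm]
    _ ≤ (1 + D / x) ^ θ := Real.rpow_le_rpow (by positivity) hratio hθ.1
    _ ≤ 1 ^ θ + (D / x) ^ θ :=
        Real.rpow_add_le_add_rpow zero_le_one (by positivity) hθ.1 hθ.2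
    _ = 1 + D ^ θ * x ^ (-θ) := by
        rw [Real.one_rpow, Real.div_rpow hD hx.le, Real.rpow_neg hx.le, div_eq_mul_inv]

theorem re_cauchyLog (A B : ℝ) (z : ℂ) :
    (cauchyLog A B z).re = Real.log ‖(B : ℂ) - z‖ - Real.log ‖(A : ℂ) - z‖ := by
  simp [cauchyLog, Complex.log_re]

theorem norm_cauchyLog_le (A B : ℝ) (z : ℂ) :
    ‖cauchyLog A B z‖ ≤ |(cauchyLog A B z).re| + 2 * Real.pi := by
  have him : |(cauchyLog A B z).im| ≤ 2 * Real.pi := by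
    rw [cauchyLog, Complex.sub_im, Complex.log_im, Complex.log_im, two_mul]
    exact (abs_sub _ _).trans
      (add_le_add (Complex.abs_arg_le_pi _) (Complex.abs_arg_le_pi _))
  exact (Complex.norm_le_abs_re_add_abs_im _).trans (by gcongr)

theorem exp_mul_abs_re_cauchyLog_le {A B θ : ℝ} {z : ℂ} (hθ : θ ∈ Icc (0 : ℝ) 1) (hA : z.re ≠ A)
    (hB : z.re ≠ B) :
    Real.exp (θ * |(cauchyLog A B z).re|) ≤
      (1 + |B - A| ^ θ) * (1 + |z.re - A| ^ (-θ) + |z.re - B| ^ (-θ)) := by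
  have hdist (c : ℝ) : |z.re - c| ≤ ‖(c : ℂ) - z‖ := by
    rw [abs_sub_comm]
    simpa using Complex.abs_re_le_norm ((c : ℂ) - z)
  have hposA : 0 < |z.re - A| := abs_pos.2 (sub_ne_zero.2 hA)
  have hposB : 0 < |z.re - B| := abs_pos.2 (sub_ne_zero.2 hB)
  have htri (a b : ℝ) : ‖(b : ℂ) - z‖ ≤ ‖(a : ℂ) - z‖ + |b - a| := by
    rw [add_comm, ← Real.norm_eq_abs, ← Complex.norm_real, Complex.ofReal_sub]
    exact norm_sub_le_norm_sub_add_norm_sub _ _ _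
  have hD : 0 ≤ |B - A| ^ θ := by positivity
  have hpowA : 0 ≤ |z.re - A| ^ (-θ) := by positivity
  have hpowB : 0 ≤ |z.re - B| ^ (-θ) := by positivity
  rw [re_cauchyLog]
  rcases abs_choice (Real.log ‖(B : ℂ) - z‖ - Real.log ‖(A : ℂ) - z‖) with h | h <;> rw [h]
  · have hle := exp_mul_log_sub_log_le hposA (hdist A) (hposB.trans_le (hdist B)) (htri A B)
      (abs_nonneg _) hθ
    exact hle.trans (by nlinarith [mul_nonneg hD hpowB])
  · have hle := exp_mul_log_sub_log_le hposB (hdist B) (hposA.trans_le (hdist A)) (htri B A)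
      (abs_nonneg _) hθ
    rw [neg_sub]
    rw [abs_sub_comm A B] at hle
    exact hle.trans (by nlinarith [mul_nonneg hD hpowA])

/-- The product `exp (-Φ) * Ψ`, where `Φ` and `Ψ` are the extended Cauchy transforms of `f` and
`g`. Its boundary values carry the two sides of the inversion formula. -/
noncomputable def expNegCauchyMul (A B : ℝ) (f g : ℝ → ℝ) (z : ℂ) : ℂ :=
  Complex.exp (-cauchyExt A B f z) * cauchyExt A B g z

theorem norm_cauchyExt_le (A B : ℝ) (f : ℝ → ℝ) (z : ℂ) :
    ‖cauchyExt A B f z‖ ≤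
      ‖cauchyRegular A B f z‖ + |f z.re| * (|(cauchyLog A B z).re| + 2 * Real.pi) := by
  refine (norm_add_le _ _).trans ?_
  rw [norm_mul, Complex.norm_real, Real.norm_eq_abs]
  gcongr
  exact norm_cauchyLog_le A B z

theorem norm_exp_neg_cauchyExt_le (A B : ℝ) (f : ℝ → ℝ) (z : ℂ) :
    ‖Complex.exp (-cauchyExt A B f z)‖ ≤
      Real.exp (‖cauchyRegular A B f z‖ + |f z.re| * |(cauchyLog A B z).re|) := by
  rw [Complex.norm_exp, Real.exp_le_exp, cauchyExt, neg_add, Complex.add_re, Complex.neg_re,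
    Complex.neg_re, Complex.re_ofReal_mul, ← abs_mul]
  exact add_le_add ((neg_le_abs _).trans (Complex.abs_re_le_norm _)) (neg_le_abs _)

theorem norm_expNegCauchyMul_le {A B m M Kf Kg δ : ℝ} {f g : ℝ → ℝ} {z : ℂ} (hδ : 0 < δ)
    (hfm : |f z.re| ≤ m) (hgM : |g z.re| ≤ M) (hKf : ‖cauchyRegular A B f z‖ ≤ Kf)
    (hKg : ‖cauchyRegular A B g z‖ ≤ Kg) :
    ‖expNegCauchyMul A B f g z‖ ≤ Real.exp Kf * (Kg + M * (δ⁻¹ + 2 * Real.pi)) *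
      Real.exp ((m + δ) * |(cauchyLog A B z).re|) := by
  set l : ℝ := |(cauchyLog A B z).re|
  have hM : 0 ≤ M := (abs_nonneg _).trans hgM
  have : 0 ≤ l := abs_nonneg _
  have hone : 1 ≤ Real.exp (δ * l) := Real.one_le_exp (by positivity)
  have hgrowth : l + 2 * Real.pi ≤ (δ⁻¹ + 2 * Real.pi) * Real.exp (δ * l) := by
    have hlin : l ≤ δ⁻¹ * Real.exp (δ * l) := by
      rw [inv_mul_eq_div, le_div_iff₀' hδ]
      linarith [Real.add_one_le_exp (δ * l)]
    have hconst : 2 * Real.pi ≤ 2 * Real.pi * Real.exp (δ * l) :=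
      le_mul_of_one_le_right (by positivity) hone
    linarith
  have hΦ : ‖Complex.exp (-cauchyExt A B f z)‖ ≤ Real.exp Kf * Real.exp (m * l) := by
    rw [← Real.exp_add]
    refine (norm_exp_neg_cauchyExt_le A B f z).trans (Real.exp_le_exp.2 ?_)
    gcongr
  have hΨ : ‖cauchyExt A B g z‖ ≤ (Kg + M * (δ⁻¹ + 2 * Real.pi)) * Real.exp (δ * l) := calc
    ‖cauchyExt A B g z‖ ≤ Kg + M * (l + 2 * Real.pi) :=
      (norm_cauchyExt_le A B g z).trans (by gcongr)
    _ ≤ Kg * Real.exp (δ * l) + M * ((δ⁻¹ + 2 * Real.pi) * Real.exp (δ * l)) := by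
      gcongr
      exact le_mul_of_one_le_right ((norm_nonneg _).trans hKg) hone
    _ = (Kg + M * (δ⁻¹ + 2 * Real.pi)) * Real.exp (δ * l) := by ring
  calc ‖expNegCauchyMul A B f g z‖
      ≤ Real.exp Kf * Real.exp (m * l) *
          ((Kg + M * (δ⁻¹ + 2 * Real.pi)) * Real.exp (δ * l)) := by
        rw [expNegCauchyMul, norm_mul]
        gcongr
    _ = Real.exp Kf * (Kg + M * (δ⁻¹ + 2 * Real.pi)) * Real.exp ((m + δ) * l) := by
        rw [add_mul m, Real.exp_add]
        ring

theorem exists_norm_apply_le_of_norm_le {E F : Type*} [SeminormedAddCommGroup E] [ProperSpace E]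
    [SeminormedAddCommGroup F] {f : E → F} (hf : Continuous f) (R : ℝ) :
    ∃ K, ∀ x, ‖x‖ ≤ R → ‖f x‖ ≤ K := by
  simpa using (isCompact_closedBall (0 : E) R).exists_bound_of_continuousOn hf.continuousOn

theorem exists_norm_expNegCauchyMul_le {f g : ℝ → ℝ} {Cf γf Cg γg : ℝ≥0} {m θ : ℝ}
    (hγf : 0 < γf) (hf : HolderWith Cf γf f) (hγg : 0 < γg) (hg : HolderWith Cg γg g)
    (hfm : ∀ x, |f x| ≤ m) (hmθ : m < θ) (hθ : θ ≤ 1) (A B R : ℝ) :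
    ∃ K, ∀ z : ℂ, ‖z‖ ≤ R → z.re ≠ A → z.re ≠ B →
      ‖expNegCauchyMul A B f g z‖ ≤ K * (1 + |z.re - A| ^ (-θ) + |z.re - B| ^ (-θ)) := by
  have hgcont := hg.continuous hγg
  obtain ⟨Kf, hKf⟩ := exists_norm_apply_le_of_norm_le (continuous_cauchyRegular hγf hf A B) R
  obtain ⟨Kg, hKg⟩ := exists_norm_apply_le_of_norm_le (continuous_cauchyRegular hγg hg A B) R
  obtain ⟨M, hM⟩ := exists_norm_apply_le_of_norm_le (f := fun z : ℂ ↦ g z.re) (by fun_prop) R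
  have hθ0 : 0 ≤ θ := ((abs_nonneg _).trans (hfm 0)).trans hmθ.le
  have hδ : 0 < θ - m := sub_pos.2 hmθ
  set K : ℝ := Real.exp Kf * (Kg + M * ((θ - m)⁻¹ + 2 * Real.pi))
  refine ⟨K * (1 + |B - A| ^ θ), fun z hz hA hB ↦ ?_⟩
  have hgM : |g z.re| ≤ M := hM z hz
  have hK : 0 ≤ K := by
    have : 0 ≤ Kg := (norm_nonneg _).trans (hKg z hz)
    have : 0 ≤ M := (abs_nonneg _).trans hgM
    positivity
  calc ‖expNegCauchyMul A B f g z‖ ≤ K * Real.exp (θ * |(cauchyLog A B z).re|) := by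
        simpa using norm_expNegCauchyMul_le hδ (hfm z.re) hgM (hKf z hz) (hKg z hz)
    _ ≤ K * ((1 + |B - A| ^ θ) * (1 + |z.re - A| ^ (-θ) + |z.re - B| ^ (-θ))) :=
        mul_le_mul_of_nonneg_left (exp_mul_abs_re_cauchyLog_le ⟨hθ0, hθ⟩ hA hB) hK
    _ = K * (1 + |B - A| ^ θ) * (1 + |z.re - A| ^ (-θ) + |z.re - B| ^ (-θ)) := by ring

theorem isBigO_cauchyTransform {f : ℝ → ℝ} {A B : ℝ} (hAB : A ≤ B)
    (hf : IntervalIntegrable f volume A B) :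
    cauchyTransform A B f =O[Bornology.cobounded ℂ] fun z ↦ z⁻¹ := by
  refine .of_bound (2 * ∫ r in A..B, |f r|) ?_
  filter_upwards [(hasBasis_cobounded_norm (E := ℂ)).mem_of_mem (i := 2 * (|A| + |B|) + 1) trivial]
    with z hz
  rw [norm_inv, ← div_eq_mul_inv]
  exact norm_cauchyTransform_le hAB hf ((lt_add_one _).trans_le hz)

theorem isBigO_expNegCauchyMul {f g : ℝ → ℝ} {A B : ℝ} (hAB : A ≤ B)
    (hf : IntervalIntegrable f volume A B) (hg : IntervalIntegrable g volume A B) :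
    expNegCauchyMul A B f g =O[Bornology.cobounded ℂ ⊓ 𝓟 {z | 0 < z.im}] fun z ↦ z⁻¹ := by
  have hlim : Tendsto (fun z ↦ Complex.exp (-cauchyTransform A B f z)) (Bornology.cobounded ℂ)
      (𝓝 (Complex.exp (-0))) :=
    ((isBigO_cauchyTransform hAB hf).trans_tendsto tendsto_inv₀_cobounded).neg.cexp
  have hprod := (hlim.isBigO_one ℂ).mul (isBigO_cauchyTransform hAB hg)
  simp only [one_mul] at hprod
  refine (hprod.mono inf_le_left).congr' ?_ .rfl
  filter_upwards [mem_inf_of_right (mem_principal_self _)] with z hz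
  rw [expNegCauchyMul, cauchyExt_eq_cauchyTransform hf hz, cauchyExt_eq_cauchyTransform hg hz]

theorem differentiableOn_expNegCauchyMul {f g : ℝ → ℝ} {A B : ℝ}
    (hf : IntervalIntegrable f volume A B) (hg : IntervalIntegrable g volume A B) :
    DifferentiableOn ℂ (expNegCauchyMul A B f g) {z | 0 < z.im} := by
  have hdiff : DifferentiableOn ℂ
      (fun z ↦ Complex.exp (-cauchyTransform A B f z) * cauchyTransform A B g z)
      {z | 0 < z.im} := fun z hz ↦
    ((differentiableAt_cauchyTransform hf (ne_of_gt hz)).neg.cexp.mul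
      (differentiableAt_cauchyTransform hg (ne_of_gt hz))).differentiableWithinAt
  refine hdiff.congr fun z hz ↦ ?_
  rw [expNegCauchyMul, cauchyExt_eq_cauchyTransform hf hz, cauchyExt_eq_cauchyTransform hg hz]

theorem continuousAt_expNegCauchyMul {f g : ℝ → ℝ} {Cf γf Cg γg : ℝ≥0} (hγf : 0 < γf)
    (hf : HolderWith Cf γf f) (hγg : 0 < γg) (hg : HolderWith Cg γg g) {A B : ℝ} {z : ℂ}
    (hz : 0 ≤ z.im) (hA : z ≠ A) (hB : z ≠ B) : ContinuousAt (expNegCauchyMul A B f g) z :=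
  (continuousAt_cauchyExt hγf hf hz hA hB).neg.cexp.mul (continuousAt_cauchyExt hγg hg hz hA hB)

theorem im_expNegCauchyMul_of_notMem_Icc {A B x : ℝ} (hAB : A ≤ B) (hx : x ∉ Icc A B)
    (f g : ℝ → ℝ) : (expNegCauchyMul A B f g x).im = 0 := by
  rw [expNegCauchyMul, Complex.mul_im, Complex.exp_im, Complex.neg_im,
    im_cauchyExt_ofReal_of_notMem_Icc hAB hx f, im_cauchyExt_ofReal_of_notMem_Icc hAB hx g]
  simp

theorem exists_norm_expNegCauchyMul_le_of_im_pos {f g : ℝ → ℝ} {Cf γf Cg γg : ℝ≥0} {A B m θ : ℝ}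
    (hAB : A ≤ B) (hγf : 0 < γf) (hf : HolderWith Cf γf f) (hγg : 0 < γg)
    (hg : HolderWith Cg γg g) (hfm : ∀ x, |f x| ≤ m) (hmθ : m < θ) (hθ : θ ≤ 1) :
    ∃ K, ∀ z : ℂ, 0 < z.im → z.re ≠ A → z.re ≠ B →
      ‖expNegCauchyMul A B f g z‖ ≤ K * (1 + |z.re - A| ^ (-θ) + |z.re - B| ^ (-θ)) := by
  obtain ⟨c, hc, hbig⟩ := (isBigO_expNegCauchyMul hAB ((hf.continuous hγf).intervalIntegrable A B)
    ((hg.continuous hγg).intervalIntegrable A B)).exists_nonneg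
  obtain ⟨R, hR⟩ := eventually_cobounded_inf_principal_iff.1 hbig.bound
  obtain ⟨K, hK⟩ := exists_norm_expNegCauchyMul_le hγf hf hγg hg hfm hmθ hθ A B (max R 1)
  refine ⟨max K c, fun z hz hA hB ↦ ?_⟩
  rcases le_total ‖z‖ (max R 1) with hzR | hzR
  · exact (hK z hzR hA hB).trans (by gcongr; exact le_max_left _ _)
  · have hinv : ‖z⁻¹‖ ≤ 1 := by
      rw [norm_inv]
      exact inv_le_one_of_one_le₀ ((le_max_right _ _).trans hzR)
    calc ‖expNegCauchyMul A B f g z‖ ≤ c * ‖z⁻¹‖ := hR z hz ((le_max_left _ _).trans hzR)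
      _ ≤ c * (1 + |z.re - A| ^ (-θ) + |z.re - B| ^ (-θ)) := by
        gcongr
        linarith [show 0 ≤ |z.re - A| ^ (-θ) + |z.re - B| ^ (-θ) by positivity]
      _ ≤ max K c * (1 + |z.re - A| ^ (-θ) + |z.re - B| ^ (-θ)) := by
        gcongr
        exact le_max_right _ _

theorem locallyIntegrable_abs_sub_rpow {p : ℝ} (hp : -1 < p) (c : ℝ) :
    LocallyIntegrable (fun x ↦ |x - c| ^ p) := by
  refine locallyIntegrable_iff.2 fun k hk ↦ ?_
  obtain ⟨a, b, hab, hkab⟩ : ∃ a b, a ≤ b ∧ k ⊆ Icc a b := by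
    obtain ⟨r, hr, hkr⟩ := hk.isBounded.subset_closedBall_lt 0 0
    exact ⟨-r, r, by linarith, by simpa [Real.closedBall_eq_Icc] using hkr⟩
  exact ((intervalIntegrable_iff_integrableOn_Icc_of_le hab).1
    (intervalIntegrable_abs_sub_rpow hp c a b)).mono_set hkab

theorem tendsto_pvApprox_im_expNegCauchyMul {f g : ℝ → ℝ} {Cf γf Cg γg : ℝ≥0} {A B m s : ℝ}
    (hγf : 0 < γf) (hf : HolderWith Cf γf f) (hγg : 0 < γg) (hg : HolderWith Cg γg g)
    (hfm : ∀ x, |f x| ≤ m) (hm : m < 1) (hs : s ∈ Ioo A B) :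
    Tendsto (pvApprox A B (fun x ↦ (expNegCauchyMul A B f g x).im) s) (𝓝[>] 0)
      (𝓝 (Real.pi * (expNegCauchyMul A B f g s).re)) := by
  have hAB : A ≤ B := (hs.1.trans hs.2).le
  have hfint := (hf.continuous hγf).intervalIntegrable (μ := volume) A B
  have hgint := (hg.continuous hγg).intervalIntegrable (μ := volume) A B
  have hcont (x : ℝ) (hA : x ≠ A) (hB : x ≠ B) : ContinuousAt (expNegCauchyMul A B f g) x :=
    continuousAt_expNegCauchyMul hγf hf hγg hg (by simp) (by simpa) (by simpa)
  obtain ⟨θ, hmθ, hθ⟩ := exists_between hm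
  obtain ⟨K, hK⟩ := exists_norm_expNegCauchyMul_le_of_im_pos hAB hγf hf hγg hg hfm hmθ hθ.le
  have hloc (c : ℝ) : LocallyIntegrable fun x ↦ |x - c| ^ (-θ) :=
    locallyIntegrable_abs_sub_rpow (neg_lt_neg hθ) c
  refine tendsto_pvApprox_im
    (p := fun x ↦ K • (1 + |x - A| ^ (-θ) + |x - B| ^ (-θ)))
    (differentiableOn_expNegCauchyMul hfint hgint) (isBigO_expNegCauchyMul hAB hfint hgint)
    ((((locallyIntegrable_const 1).add (hloc A)).add (hloc B)).smul K) ?_ ?_ hs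
    (fun x hx ↦ im_expNegCauchyMul_of_notMem_Icc hAB hx f g) (hcont s hs.1.ne' hs.2.ne)
  · filter_upwards [Measure.ae_ne volume A, Measure.ae_ne volume B] with x hA hB y hy
    simpa using hK (x + y * Complex.I) (by simpa) (by simpa) (by simpa)
  · filter_upwards [Measure.ae_ne volume A, Measure.ae_ne volume B] with x hA hB
    exact hcont x hA hB

/-! ### The inversion formula -/

theorem expNegCauchyMul_ofReal_of_mem_Ioo {f g : ℝ → ℝ} {Cf γf Cg γg : ℝ≥0} {A B x : ℝ}
    (hγf : 0 < γf) (hf : HolderWith Cf γf f) (hγg : 0 < γg) (hg : HolderWith Cg γg g)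
    (hx : x ∈ Ioo A B) :
    expNegCauchyMul A B f g x = Real.pi *
      ⟨Real.exp (-(Real.pi * Hfin A B f x)) *
          (Real.cos (Real.pi * f x) * Hfin A B g x + Real.sin (Real.pi * f x) * g x),
        Real.exp (-(Real.pi * Hfin A B f x)) *
          (Real.cos (Real.pi * f x) * g x - Real.sin (Real.pi * f x) * Hfin A B g x)⟩ := by
  have hphase : Complex.exp (-cauchyExt A B f x) = Real.exp (-(Real.pi * Hfin A B f x)) *
      (Real.cos (Real.pi * f x) - Real.sin (Real.pi * f x) * Complex.I) := by
    rw [cauchyExt_ofReal_eq_Hfin hγf hf hx, mul_add, neg_add, ← mul_assoc, Complex.exp_add,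
      ← neg_mul (_ * _), Complex.exp_mul_I, Complex.cos_neg, Complex.sin_neg]
    push_cast
    ring
  rw [expNegCauchyMul, hphase, cauchyExt_ofReal_eq_Hfin hγg hg hx]
  apply Complex.ext <;>
    simp only [Complex.mul_re, Complex.mul_im, Complex.add_re, Complex.add_im, Complex.sub_re,
      Complex.sub_im, Complex.ofReal_re, Complex.ofReal_im, Complex.I_re, Complex.I_im] <;>
    ring

theorem tendsto_pvApprox_exp_neg_Hfin_of_holderWith {f g : ℝ → ℝ} {Cf γf Cg γg : ℝ≥0}
    {A B m s : ℝ} (hγf : 0 < γf) (hf : HolderWith Cf γf f) (hγg : 0 < γg)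
    (hg : HolderWith Cg γg g) (hfm : ∀ x, |f x| ≤ m) (hm : m < 1) (hs : s ∈ Ioo A B) :
    Tendsto (pvApprox A B (fun x ↦ Real.exp (-(Real.pi * Hfin A B f x)) *
        (Real.cos (Real.pi * f x) * g x - Real.sin (Real.pi * f x) * Hfin A B g x)) s) (𝓝[>] 0)
      (𝓝 (Real.pi * (Real.exp (-(Real.pi * Hfin A B f s)) *
        (Real.cos (Real.pi * f s) * Hfin A B g s + Real.sin (Real.pi * f s) * g s)))) := by
  have hvalue {x : ℝ} (hx : x ∈ Ioo A B) := expNegCauchyMul_ofReal_of_mem_Ioo hγf hf hγg hg hx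
  have hscale := (tendsto_pvApprox_im_expNegCauchyMul hγf hf hγg hg hfm hm hs).const_mul
    Real.pi⁻¹
  rw [hvalue hs, Complex.re_ofReal_mul, inv_mul_cancel_left₀ Real.pi_ne_zero] at hscale
  simp only [← pvApprox_const_mul] at hscale
  refine hscale.congr' (pvApprox_eventuallyEq_of_eqOn hs fun x hx ↦ ?_)
  simp only [hvalue hx, Complex.im_ofReal_mul, inv_mul_cancel_left₀ Real.pi_ne_zero]

theorem tendsto_pvApprox_exp_neg_Hfin {f g : ℝ → ℝ} {Cf γf Cg γg : ℝ≥0} {A B s : ℝ}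
    (hγf : 0 < γf) (hf : HolderOnWith Cf γf f (Icc A B)) (hγg : 0 < γg)
    (hg : HolderOnWith Cg γg g (Icc A B)) (hf1 : ∀ x ∈ Icc A B, |f x| < 1) (hs : s ∈ Ioo A B) :
    Tendsto (pvApprox A B (fun x ↦ Real.exp (-(Real.pi * Hfin A B f x)) *
        (Real.cos (Real.pi * f x) * g x - Real.sin (Real.pi * f x) * Hfin A B g x)) s) (𝓝[>] 0)
      (𝓝 (Real.pi * (Real.exp (-(Real.pi * Hfin A B f s)) *
        (Real.cos (Real.pi * f s) * Hfin A B g s + Real.sin (Real.pi * f s) * g s)))) := by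
  have hAB : A ≤ B := (hs.1.trans hs.2).le
  obtain ⟨x₀, hx₀, hmax⟩ := isCompact_Icc.exists_isMaxOn (nonempty_Icc.2 hAB)
    (hf.continuousOn hγf).abs
  have hextend (h : ℝ → ℝ) : EqOn (IccExtend hAB ((Icc A B).domRestrict h)) h (Ioo A B) :=
    fun x hx ↦ IccExtend_of_mem hAB _ (Ioo_subset_Icc_self hx)
  have hH (h : ℝ → ℝ) {x : ℝ} (hx : x ∈ Ioo A B) :
      Hfin A B (IccExtend hAB ((Icc A B).domRestrict h)) x = Hfin A B h x :=
    Hfin_congr hx (hextend h)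
  have hlim := tendsto_pvApprox_exp_neg_Hfin_of_holderWith hγf (holderWith_IccExtend hAB hf) hγg
    (holderWith_IccExtend hAB hg) (fun x ↦ hmax (projIcc A B hAB x).2) (hf1 x₀ hx₀) hs
  rw [hH f hs, hH g hs, hextend f hs, hextend g hs] at hlim
  refine hlim.congr' (pvApprox_eventuallyEq_of_eqOn hs fun x hx ↦ ?_)
  simp only [hH f hx, hH g hx, hextend f hx, hextend g hx]

theorem inversion_formula_variable_coefficient_general {A B : ℝ} {α φ w ψ : ℝ → ℝ}
    {Cα γα Cw γw : ℝ≥0} (hγα : 0 < γα) (hα : HolderOnWith Cα γα α (Icc A B))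
    (hα1 : ∀ r ∈ Icc A B, |α r| < 1) (hγw : 0 < γw) (hwHolder : HolderOnWith Cw γw w (Icc A B))
    (hw : ∀ r ∈ Ioo A B,
      w r = Real.cos (Real.pi * α r) * Real.exp (Real.pi * Hfin A B α r) * φ r)
    (hψ : ∀ r ∈ Ioo A B, ψ r = Real.cos (Real.pi * α r) ^ 2 * φ r -
      Real.sin (Real.pi * α r) * Real.exp (-(Real.pi * Hfin A B α r)) * Hfin A B w r)
    {s : ℝ} (hs : s ∈ Ioo A B) (hcos : Real.cos (Real.pi * α s) ≠ 0) :
    (∃ L : ℝ, Tendsto (pvApprox A B ψ s) (𝓝[>] 0) (𝓝 L)) ∧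
      ψ s + Real.tan (Real.pi * α s) * Hfin A B ψ s = φ s := by
  have hcancel {r : ℝ} (hr : r ∈ Ioo A B) :
      Real.exp (-(Real.pi * Hfin A B α r)) * w r = Real.cos (Real.pi * α r) * φ r := by
    rw [hw r hr, Real.exp_neg]
    field_simp
  have hlim := (tendsto_pvApprox_exp_neg_Hfin hγα hα hγw hwHolder hα1 hs).congr'
    (pvApprox_eventuallyEq_of_eqOn (g := ψ) hs fun r hr ↦ by
      simp only [hψ r hr]
      linear_combination Real.cos (Real.pi * α r) * hcancel hr)
  refine ⟨⟨_, hlim⟩, ?_⟩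
  have hHψ : Hfin A B ψ s = Real.cos (Real.pi * α s) *
      (Real.exp (-(Real.pi * Hfin A B α s)) * Hfin A B w s + Real.sin (Real.pi * α s) * φ s) := by
    rw [Hfin_eq_div_pi hlim, mul_div_cancel_left₀ _ Real.pi_ne_zero]
    linear_combination Real.sin (Real.pi * α s) * hcancel hs
  rw [hHψ, ← mul_assoc, Real.tan_mul_cos hcos, hψ s hs]
  linear_combination φ s * Real.sin_sq_add_cos_sq (Real.pi * α s)

end

/-- Inversion of the dominant singular integral operator `L_α[ψ] = ψ + tan(πα) H[ψ]`:
the explicit `ψ = cos²(πα)φ − sin(πα) e^{−πH[α]} H[cos(πα) e^{πH[α]} φ]` satisfies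
`L_α[ψ] = φ` on `(A,B)`. -/
theorem inversion_formula_variable_coefficient (A B : ℝ) (hAB : A < B) (α φ : ℝ → ℝ)
    (γα : ℝ) (hγα : γα ∈ Set.Ioc (0 : ℝ) 1) (Cα : ℝ) (hCα : 0 ≤ Cα)
    (hαHolder : ∀ r ∈ Set.Icc A B, ∀ r' ∈ Set.Icc A B, |α r - α r'| ≤ Cα * |r - r'| ^ γα)
    (hαrange : ∀ r ∈ Set.Icc A B, α r ∈ Set.Ioo (-(1/2) : ℝ) (1/2))
    (γφ : ℝ) (hγφ : γφ ∈ Set.Ioc (0 : ℝ) 1) (Cφ : ℝ) (hCφ : 0 ≤ Cφ)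
    (hφHolder : ∀ r ∈ Set.Icc A B, ∀ r' ∈ Set.Icc A B, |φ r - φ r'| ≤ Cφ * |r - r'| ^ γφ)
    (w : ℝ → ℝ)
    (hw : ∀ r : ℝ, w r = Real.cos (Real.pi * α r) * Real.exp (Real.pi * Hfin A B α r) * φ r)
    (γw : ℝ) (hγw : γw ∈ Set.Ioc (0 : ℝ) 1) (Cw : ℝ) (hCw : 0 ≤ Cw)
    (hwHolder : ∀ r ∈ Set.Icc A B, ∀ r' ∈ Set.Icc A B, |w r - w r'| ≤ Cw * |r - r'| ^ γw)
    (ψ : ℝ → ℝ)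
    (hψ : ∀ s : ℝ, ψ s = Real.cos (Real.pi * α s) ^ 2 * φ s -
        Real.sin (Real.pi * α s) * Real.exp (-(Real.pi * Hfin A B α s)) * Hfin A B w s) :
    ∀ s ∈ Set.Ioo A B,
      (∃ L : ℝ, Tendsto (pvApprox A B ψ s) (𝓝[>] 0) (𝓝 L)) ∧
      ψ s + Real.tan (Real.pi * α s) * Hfin A B ψ s = φ s := by
  intro s hs
  have hrange (r : ℝ) (hr : r ∈ Set.Icc A B) : |α r| < 1 / 2 :=
    abs_lt.2 (by simpa using hαrange r hr)
  have hcos : 0 < Real.cos (Real.pi * α s) := by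
    have := abs_lt.1 (hrange s (Set.Ioo_subset_Icc_self hs))
    exact Real.cos_pos_of_mem_Ioo ⟨by nlinarith [Real.pi_pos], by nlinarith [Real.pi_pos]⟩
  exact inversion_formula_variable_coefficient_general (γα := ⟨γα, hγα.1.le⟩)
    (Cα := ⟨Cα, hCα⟩) (γw := ⟨γw, hγw.1.le⟩) (Cw := ⟨Cw, hCw⟩) hγα.1
    (holderOnWith_of_abs_sub_le hαHolder) (fun r hr ↦ (hrange r hr).trans one_half_lt_one) hγw.1
    (holderOnWith_of_abs_sub_le hwHolder) (fun r _ ↦ hw r) (fun r _ ↦ hψ r) hs hcos.ne'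
end

section
/- Let 0 < k₁ < k₂ be real numbers. Then for every real number k, 1 − (√2/π) ∫_{k₁}^{k₂} q ((q²−k₁²)/(k₂²−q²))^{1/4} / (k²+q²) dq = ((k²+k₁²)/(k²+k₂²))^{1/4}. -/
open intervalIntegral

/-!
The Möbius map `t ↦ (t - a) / (b - t)` carries `(a, b)` onto `(0, ∞)` and turns
`∫ t in a..b, ((t - a) / (b - t)) ^ s / (c + t)` into the integral over `w > 0` of
`w ^ s * (1 / (w + ρ) - 1 / (w + 1))`, where `ρ = (c + a) / (c + b)`. This is a difference of two
of Loewner's integral representations of the power `x ↦ x ^ s`, at `x = 1` and at `x = ρ`, hence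
equals `κ * (1 - ρ ^ s)`. The constant `κ` is the Beta integral `B(s, 1 - s) = π / sin (π s)`.
The spectral integral is the case `t = q²`, `s = 1 / 4`.
-/

open MeasureTheory Set
open scoped Real

section MobiusSubstitution

theorem bijOn_sub_div_sub {𝕜 : Type*} [Field 𝕜] [LinearOrder 𝕜] [IsStrictOrderedRing 𝕜]
    {a b : 𝕜} (hab : a < b) : BijOn (fun t ↦ (t - a) / (b - t)) (Ioo a b) (Ioi 0) := by
  refine InvOn.bijOn (f' := fun w ↦ (a + b * w) / (1 + w)) ⟨fun t ht ↦ ?_, fun w hw ↦ ?_⟩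
    (fun t ht ↦ div_pos (sub_pos.2 ht.1) (sub_pos.2 ht.2)) (fun w hw ↦ ?_)
  · have : b - t ≠ 0 := (sub_pos.2 ht.2).ne'
    have : b - t + (t - a) ≠ 0 := by simpa [sub_eq_zero] using hab.ne'
    field_simp
    ring
  · have : 1 + w ≠ 0 := (add_pos one_pos hw).ne'
    have hsub : b * (1 + w) - (a + b * w) = b - a := by ring
    have : b * (1 + w) - (a + b * w) ≠ 0 := hsub ▸ sub_ne_zero.2 hab.ne'
    field_simp
    ring
  · rw [mem_Ioi] at hw
    constructor
    · rw [lt_div_iff₀ (by positivity)]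
      nlinarith
    · rw [div_lt_iff₀ (by positivity)]
      nlinarith

theorem hasDerivAt_sub_div_sub {𝕜 : Type*} [NontriviallyNormedField 𝕜] (a : 𝕜) {b t : 𝕜}
    (ht : t ≠ b) : HasDerivAt (fun t ↦ (t - a) / (b - t)) ((b - a) / (b - t) ^ 2) t := by
  refine (((hasDerivAt_id t).sub_const a).div ((hasDerivAt_id t).const_sub b)
    (sub_ne_zero.2 ht.symm)).congr_deriv ?_
  simp only [id_eq]
  ring

theorem integral_Ioi_zero_eq_intervalIntegral_sub_div_sub {E : Type*} [NormedAddCommGroup E]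
    [NormedSpace ℝ E] {a b : ℝ} (hab : a < b) (g : ℝ → E) :
    ∫ w in Ioi 0, g w = ∫ t in a..b, ((b - a) / (b - t) ^ 2) • g ((t - a) / (b - t)) := by
  have hbij := bijOn_sub_div_sub hab
  rw [integral_of_le hab.le, integral_Ioc_eq_integral_Ioo, ← hbij.image_eq,
    integral_image_eq_integral_abs_deriv_smul measurableSet_Ioo
      (fun t ht ↦ (hasDerivAt_sub_div_sub a ht.2.ne).hasDerivWithinAt) hbij.injOn]
  refine setIntegral_congr_fun measurableSet_Ioo fun t _ ↦ ?_
  simp only [abs_of_nonneg (div_nonneg (sub_nonneg.2 hab.le) (sq_nonneg (b - t)))]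

end MobiusSubstitution

section PowerRepresentation

variable {s : ℝ}

theorem integral_rpow_mul_one_sub_rpow_neg (hs : s ∈ Ioo 0 1) :
    ∫ x in (0 : ℝ)..1, x ^ (s - 1) * (1 - x) ^ (-s) = π / Real.sin (π * s) := by
  have hbeta : Complex.betaIntegral s (1 - s : ℝ) =
      ((∫ x in (0 : ℝ)..1, x ^ (s - 1) * (1 - x) ^ (-s) : ℝ) : ℂ) := by
    rw [Complex.betaIntegral, ← intervalIntegral.integral_ofReal]
    refine integral_congr fun x hx ↦ ?_
    rw [uIcc_of_le zero_le_one] at hx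
    simp [Complex.ofReal_cpow hx.1, Complex.ofReal_cpow (sub_nonneg.2 hx.2)]
  have hgamma := Complex.Gamma_mul_Gamma_eq_betaIntegral (s := s) (t := (1 - s : ℝ))
    (by simpa using hs.1) (by simpa using hs.2)
  rw [hbeta, ← Complex.ofReal_add, add_sub_cancel, Complex.ofReal_one, Complex.Gamma_one,
    one_mul, Complex.Gamma_ofReal, Complex.Gamma_ofReal, ← Complex.ofReal_mul,
    Real.Gamma_mul_Gamma_one_sub] at hgamma
  exact (Complex.ofReal_injective hgamma).symm

theorem integral_rpowIntegrand₀₁_one (hs : s ∈ Ioo 0 1) :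
    ∫ t in Ioi 0, Real.rpowIntegrand₀₁ s t 1 = π / Real.sin (π * s) := by
  rw [integral_Ioi_zero_eq_intervalIntegral_sub_div_sub zero_lt_one,
    ← integral_rpow_mul_one_sub_rpow_neg hs]
  refine integral_congr_Ioo_of_le zero_le_one fun x hx ↦ ?_
  have hx1 : 0 < 1 - x := sub_pos.2 hx.2
  have hw : 0 ≤ x / (1 - x) := (div_pos hx.1 hx1).le
  simp only [sub_zero, smul_eq_mul]
  rw [Real.rpowIntegrand₀₁_eq_pow_div hs hw zero_le_one, Real.div_rpow hx.1.le hx1.le,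
    Real.rpow_neg hx1.le, Real.rpow_sub_one hx1.ne']
  have := Real.rpow_pos_of_pos hx1 s
  field_simp
  ring

theorem integral_Ioi_rpow_mul_inv_sub_inv (hs : s ∈ Ioo 0 1) {x y : ℝ} (hx : 0 ≤ x)
    (hy : 0 ≤ y) :
    ∫ t in Ioi 0, t ^ s * ((t + x)⁻¹ - (t + y)⁻¹) =
      π / Real.sin (π * s) * (y ^ s - x ^ s) := by
  have hdiff (t : ℝ) : t ^ s * ((t + x)⁻¹ - (t + y)⁻¹) =
      Real.rpowIntegrand₀₁ s t y - Real.rpowIntegrand₀₁ s t x := by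
    simp only [Real.rpowIntegrand₀₁]
    ring
  simp only [hdiff]
  rw [integral_sub (Real.integrableOn_rpowIntegrand₀₁_Ioi hs hy)
      (Real.integrableOn_rpowIntegrand₀₁_Ioi hs hx),
    Real.integral_rpowIntegrand₀₁_eq_rpow_mul_const hs hx,
    Real.integral_rpowIntegrand₀₁_eq_rpow_mul_const hs hy, integral_rpowIntegrand₀₁_one hs]
  ring

theorem integral_sub_div_sub_rpow_div_add (hs : s ∈ Ioo 0 1) {a b c : ℝ} (hab : a < b)
    (hac : 0 ≤ c + a) :
    ∫ t in a..b, ((t - a) / (b - t)) ^ s / (c + t) =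
      π / Real.sin (π * s) * (1 - ((c + a) / (c + b)) ^ s) := by
  have hbc : 0 < c + b := by linarith
  rw [← Real.one_rpow s, ← integral_Ioi_rpow_mul_inv_sub_inv hs (div_nonneg hac hbc.le) zero_le_one,
    integral_Ioi_zero_eq_intervalIntegral_sub_div_sub hab]
  refine integral_congr_Ioo_of_le hab.le fun t ht ↦ ?_
  have hbt : 0 < b - t := sub_pos.2 ht.2
  have hba : 0 < b - a := sub_pos.2 hab
  have hct : 0 < c + t := by linarith [ht.1]
  have hρ : (t - a) / (b - t) + (c + a) / (c + b) =
      (b - a) * (c + t) / ((b - t) * (c + b)) := by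
    field_simp
    ring
  have hone : (t - a) / (b - t) + 1 = (b - a) / (b - t) := by
    field_simp
    ring
  simp only [hρ, hone, smul_eq_mul]
  field_simp
  ring

end PowerRepresentation

theorem integral_smul_comp_sq {E : Type*} [NormedAddCommGroup E] [NormedSpace ℝ E] {x y : ℝ}
    (hx : 0 ≤ x) (hy : 0 ≤ y) (g : ℝ → E) :
    ∫ q in x..y, q • g (q ^ 2) = (2 : ℝ)⁻¹ • ∫ t in x ^ 2..y ^ 2, g t := by
  rw [← integral_deriv_smul_comp_of_deriv_nonneg (f := fun q ↦ q ^ 2) (f' := fun q ↦ 2 * q)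
    (by fun_prop) (fun q _ ↦ by simpa using hasDerivAt_pow 2 q)
    (fun q hq ↦ by linarith [(le_min hx hy).trans hq.1.le]),
    ← intervalIntegral.integral_smul]
  simp only [smul_smul, Function.comp_apply, inv_mul_cancel_left₀ (two_ne_zero' ℝ)]

theorem spectral_representation_one_gap_general {s : ℝ} (hs : s ∈ Ioo 0 1) {k₁ k₂ z : ℝ}
    (hk₁ : 0 ≤ k₁) (hk : k₁ < k₂) (hz : 0 ≤ z + k₁ ^ 2) :
    1 - 2 * Real.sin (π * s) / π *
        ∫ q in k₁..k₂, q * ((q ^ 2 - k₁ ^ 2) / (k₂ ^ 2 - q ^ 2)) ^ s / (z + q ^ 2) =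
      ((z + k₁ ^ 2) / (z + k₂ ^ 2)) ^ s := by
  have hsin : 0 < Real.sin (π * s) :=
    Real.sin_pos_of_pos_of_lt_pi (mul_pos Real.pi_pos hs.1)
      (mul_lt_of_lt_one_right Real.pi_pos hs.2)
  simp only [mul_div_assoc _ (_ ^ s), ← smul_eq_mul (_ : ℝ) (_ ^ s / _)]
  rw [integral_smul_comp_sq hk₁ (hk₁.trans hk.le)
      fun t ↦ ((t - k₁ ^ 2) / (k₂ ^ 2 - t)) ^ s / (z + t),
    integral_sub_div_sub_rpow_div_add hs (by gcongr) hz, smul_eq_mul]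
  have := Real.pi_pos
  field_simp
  ring

/-- The spectral representation of the wave function of the elliptic one-gap potential
at `x = 0`: for `0 < k₁ < k₂` and every real `k`,
`1 − (√2/π) ∫_{k₁}^{k₂} q((q²−k₁²)/(k₂²−q²))^{1/4}/(k²+q²) dq = ((k²+k₁²)/(k²+k₂²))^{1/4}`. -/
theorem spectral_representation_one_gap (k₁ k₂ : ℝ) (hk₁ : 0 < k₁) (hk : k₁ < k₂) :
    ∀ k : ℝ,
      1 - Real.sqrt 2 / Real.pi *
          ∫ q in k₁..k₂,
            q * ((q ^ 2 - k₁ ^ 2) / (k₂ ^ 2 - q ^ 2)) ^ ((1 : ℝ) / 4) / (k ^ 2 + q ^ 2) =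
        ((k ^ 2 + k₁ ^ 2) / (k ^ 2 + k₂ ^ 2)) ^ ((1 : ℝ) / 4) := by
  intro k
  have hsqrt : 2 * Real.sin (π * (1 / 4)) = Real.sqrt 2 := by
    rw [mul_one_div, Real.sin_pi_div_four, mul_div_cancel₀ _ two_ne_zero]
  rw [← hsqrt]
  exact spectral_representation_one_gap_general (by norm_num) hk₁.le hk (by positivity)
end
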